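/- (Simplicity and positivity of the ground state) Let V ∈ S_p with 1 < p < ∞ and let λ₁ = inf{ a(u,u) : u ∈ H₀(Ω), ‖u‖_{L²(Ω)} = 1 } be the first eigenvalue. Then λ₁ is simple: the eigenspace {u ∈ H₀(Ω) : a(u,v) = λ₁ ∫_Ω u v dxdy for all v ∈ H₀(Ω)} is one-dimensional, and every nonzero element of it is either positive a.e. on Ω or negative a.e. on Ω; in particular the first eigenfunction can be chosen positive a.e. on Ω. -/

import Mathlib

open MeasureTheory Set Filter

noncomputable section

/-- The open unit square `Ω = (0,1) × (0,1)` in `ℝ²`. -/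
def Omega : Set (ℝ × ℝ) := Ioo (0:ℝ) 1 ×ˢ Ioo (0:ℝ) 1

/-- Test functions on a set `s`: smooth with compact support contained in `s`. -/
def IsTestOn (s : Set (ℝ × ℝ)) (φ : ℝ × ℝ → ℝ) : Prop :=
  ContDiff ℝ (⊤ : ℕ∞) φ ∧ HasCompactSupport φ ∧ tsupport φ ⊆ s

/-- Classical partial derivative in the `x`-direction. -/
def pdx (φ : ℝ × ℝ → ℝ) (p : ℝ × ℝ) : ℝ := fderiv ℝ φ p (1, 0)

/-- Classical partial derivative in the `y`-direction. -/
def pdy (φ : ℝ × ℝ → ℝ) (p : ℝ × ℝ) : ℝ := fderiv ℝ φ p (0, 1)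

/-- `g` is a weak `x`-partial derivative of `u` on `s`. -/
def HasWeakDerivXOn (s : Set (ℝ × ℝ)) (u g : ℝ × ℝ → ℝ) : Prop :=
  LocallyIntegrableOn u s volume ∧ LocallyIntegrableOn g s volume ∧
  ∀ φ : ℝ × ℝ → ℝ, IsTestOn s φ →
    ∫ p in s, u p * pdx φ p = - ∫ p in s, g p * φ p

/-- `g` is a weak `y`-partial derivative of `u` on `s`. -/
def HasWeakDerivYOn (s : Set (ℝ × ℝ)) (u g : ℝ × ℝ → ℝ) : Prop :=
  LocallyIntegrableOn u s volume ∧ LocallyIntegrableOn g s volume ∧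
  ∀ φ : ℝ × ℝ → ℝ, IsTestOn s φ →
    ∫ p in s, u p * pdy φ p = - ∫ p in s, g p * φ p

/-- Test functions on `Ω`. -/
def IsTest (φ : ℝ × ℝ → ℝ) : Prop := IsTestOn Omega φ

/-- Membership in the weighted Sobolev space `𝓗¹(Ω)`, with weak derivatives `gx, gy`:
`u ∈ L²(Ω)`, `gx = ∂ₓu`, `gy = ∂_y u` weakly, and `y^α₁ gx, x^α₂ gy ∈ L²(Ω)`. -/
structure MemH1 (α₁ α₂ : ℝ) (u gx gy : ℝ × ℝ → ℝ) : Prop where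
  memL2 : MemLp u 2 (volume.restrict Omega)
  weakX : HasWeakDerivXOn Omega u gx
  weakY : HasWeakDerivYOn Omega u gy
  wgx : MemLp (fun p => p.2 ^ α₁ * gx p) 2 (volume.restrict Omega)
  wgy : MemLp (fun p => p.1 ^ α₂ * gy p) 2 (volume.restrict Omega)

/-- The `𝓗¹(Ω)` norm of `u` (with weak derivatives `gx, gy`). -/
def H1Norm (α₁ α₂ : ℝ) (u gx gy : ℝ × ℝ → ℝ) : ℝ :=
  Real.sqrt ((∫ p in Omega, (u p) ^ 2) +
    (∫ p in Omega, (p.2 ^ α₁ * gx p) ^ 2) +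
    (∫ p in Omega, (p.1 ^ α₂ * gy p) ^ 2))

/-- Membership in `𝓗₀¹(Ω)`: member of `𝓗¹(Ω)` approximable in the `𝓗¹` norm by
test functions. -/
def MemH10 (α₁ α₂ : ℝ) (u gx gy : ℝ × ℝ → ℝ) : Prop :=
  MemH1 α₁ α₂ u gx gy ∧
  ∀ ε : ℝ, 0 < ε → ∃ φ : ℝ × ℝ → ℝ, IsTest φ ∧
    H1Norm α₁ α₂ (fun p => u p - φ p) (fun p => gx p - pdx φ p)
      (fun p => gy p - pdy φ p) < ε

/-- Membership in `H₀(Ω) = {u ∈ 𝓗₀¹(Ω) : ∫_Ω V u² < ∞}`. -/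
def MemH0 (α₁ α₂ : ℝ) (V u gx gy : ℝ × ℝ → ℝ) : Prop :=
  MemH10 α₁ α₂ u gx gy ∧
  IntegrableOn (fun p => V p * (u p) ^ 2) Omega volume

/-- The bilinear form `a(u,v)` associated with the sub-elliptic operator with potential `V`. -/
def aForm (α₁ α₂ : ℝ) (V u gx gy v hx hy : ℝ × ℝ → ℝ) : ℝ :=
  ∫ p in Omega, ((p.2 ^ α₁ * gx p) * (p.2 ^ α₁ * hx p) +
    (p.1 ^ α₂ * gy p) * (p.1 ^ α₂ * hy p) + V p * u p * v p)

/-- The bilinear form `a₁(u,v)` (no potential). -/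
def a1Form (α₁ α₂ : ℝ) (u gx gy v hx hy : ℝ × ℝ → ℝ) : ℝ :=
  ∫ p in Omega, ((p.2 ^ α₁ * gx p) * (p.2 ^ α₁ * hx p) +
    (p.1 ^ α₂ * gy p) * (p.1 ^ α₂ * hy p))

/-- Membership in `S_p = {V ∈ L^p(Ω) : V ≥ 0 a.e., ‖V‖_{L^p(Ω)} ≤ M}`. -/
def MemSp (ppow M : ℝ) (V : ℝ × ℝ → ℝ) : Prop :=
  MemLp V (ENNReal.ofReal ppow) (volume.restrict Omega) ∧
  (∀ᵐ p ∂(volume.restrict Omega), 0 ≤ V p) ∧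
  eLpNorm V (ENNReal.ofReal ppow) (volume.restrict Omega) ≤ ENNReal.ofReal M

/-- `u` (with weak derivatives `gx, gy`) is an eigenfunction of the sub-elliptic operator
with potential `V` for the eigenvalue `lam`. -/
def IsEigenfun (α₁ α₂ : ℝ) (V : ℝ × ℝ → ℝ) (lam : ℝ) (u gx gy : ℝ × ℝ → ℝ) : Prop :=
  MemH0 α₁ α₂ V u gx gy ∧
  ∀ v hx hy : ℝ × ℝ → ℝ, MemH0 α₁ α₂ V v hx hy →
    aForm α₁ α₂ V u gx gy v hx hy = lam * ∫ p in Omega, u p * v p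

/-- The first eigenvalue `λ₁(V) = inf { a(u,u) : u ∈ H₀(Ω), ‖u‖_{L²} = 1 }`. -/
def lam1 (α₁ α₂ : ℝ) (V : ℝ × ℝ → ℝ) : ℝ :=
  sInf { r | ∃ u gx gy : ℝ × ℝ → ℝ, MemH0 α₁ α₂ V u gx gy ∧
    (∫ p in Omega, (u p) ^ 2) = 1 ∧ r = aForm α₁ α₂ V u gx gy u gx gy }

/-- `sup { a(u,u) : u ∈ span(φ), ‖u‖_{L²(Ω)} = 1 }` for a finite family `φ` with
weak derivatives `φx, φy`. -/
def rayleighSup (α₁ α₂ : ℝ) (V : ℝ × ℝ → ℝ) {k : ℕ} (φ φx φy : Fin k → ℝ × ℝ → ℝ) : ℝ :=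
  sSup { s | ∃ c : Fin k → ℝ,
    (∫ p in Omega, (∑ i, c i * φ i p) ^ 2) = 1 ∧
    s = aForm α₁ α₂ V (fun p => ∑ i, c i * φ i p) (fun p => ∑ i, c i * φx i p)
      (fun p => ∑ i, c i * φy i p) (fun p => ∑ i, c i * φ i p)
      (fun p => ∑ i, c i * φx i p) (fun p => ∑ i, c i * φy i p) }

/-- The set of values `sup { a(u,u) : u ∈ E, ‖u‖ = 1 }` over `k`-dimensional
subspaces `E` of `H₀(Ω)` (represented by `L²(Ω)`-linearly independent families of
`k` elements of `H₀(Ω)`). -/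
def minmaxSet (α₁ α₂ : ℝ) (V : ℝ × ℝ → ℝ) (k : ℕ) : Set ℝ :=
  { r | ∃ φ φx φy : Fin k → ℝ × ℝ → ℝ,
      (∀ i, MemH0 α₁ α₂ V (φ i) (φx i) (φy i)) ∧
      (∀ c : Fin k → ℝ, (∀ᵐ p ∂(volume.restrict Omega), ∑ i, c i * φ i p = 0) → c = 0) ∧
      r = rayleighSup α₁ α₂ V φ φx φy }

/-- The `k`-th eigenvalue via the min-max principle. -/
def lamk (α₁ α₂ : ℝ) (V : ℝ × ℝ → ℝ) (k : ℕ) : ℝ := sInf (minmaxSet α₁ α₂ V k)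

/-- Membership in `U = (𝓗₀¹(Ω) ∩ L^{2q}(Ω)) \ {0}`. -/
def MemU (α₁ α₂ qe : ℝ) (u gx gy : ℝ × ℝ → ℝ) : Prop :=
  MemH10 α₁ α₂ u gx gy ∧
  MemLp u (ENNReal.ofReal (2 * qe)) (volume.restrict Omega) ∧
  ¬ (∀ᵐ p ∂(volume.restrict Omega), u p = 0)

/-- The functional `J(u) = (a₁(u,u) + M ‖u‖_{L^{2q}(Ω)}²) / ‖u‖_{L²(Ω)}²`. -/
def Jfun (α₁ α₂ M qe : ℝ) (u gx gy : ℝ × ℝ → ℝ) : ℝ :=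
  (a1Form α₁ α₂ u gx gy u gx gy +
    M * (∫ p in Omega, |u p| ^ (2 * qe)) ^ (1 / qe)) / (∫ p in Omega, (u p) ^ 2)

/-!
Write `a(u, u) = ‖D u‖²` with `D u = (y^α₁ ∂ₓu, x^α₂ ∂_yu, √V u)`. Since `α₁, α₂ < 1/2`, the inverse
weights are square integrable near the axes, so a Poincaré inequality holds on every square of a
grid in `Ω`, with a constant that tends to `0` with the mesh. Hence `𝓗₀¹(Ω)` embeds compactly into
`L²(Ω)`, and minimizing sequences converge: a ground state exists.

As `‖D |u|‖ ≤ ‖D u‖`, the absolute value of a ground state is a ground state. A ground state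
`u ≥ 0` satisfies `a(u, v) = λ₁ ⟪u, v⟫ ≥ 0` for all `v ≥ 0`, and so do its multiples `n u`. Testing
this with `v = χ² (π/2 - arctan (n u))` bounds the weighted gradient of `arsinh (n u)` locally,
uniformly in `n`. If `u` vanished on a set of positive measure, Poincaré's inequality would bound
`arsinh (n u)` in `L²` uniformly in `n`, which forces `u = 0`. So a nonzero ground state `u ≥ 0` is
positive a.e.

Applied to `|u| + u`, or to `-u` if this is `0`, this shows that every ground state has a sign.
Finally, two ground states of constant sign cannot be orthogonal in `L²(Ω)`, so the ground states
form a line.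
-/

open scoped RealInnerProductSpace Topology ENNReal NNReal

/-! ### Ground states of an abstract quadratic form -/

section Variational

variable {F G : Type*} [NormedAddCommGroup F] [InnerProductSpace ℝ F]
  [NormedAddCommGroup G] [InnerProductSpace ℝ G] {E : Submodule ℝ (F × G)}

/-- The bottom of the spectrum of the quadratic form `u ↦ ‖D u‖²`, where the (unbounded) operator
`D` from `F` to `G` is encoded by its graph `E`. -/
def rayleighInf (E : Submodule ℝ (F × G)) : ℝ :=
  sInf {r | ∃ w ∈ E, ‖w.1‖ = 1 ∧ r = ‖w.2‖ ^ 2}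

/-- The solutions of the weak eigenvalue equation `⟪D u, D v⟫ = rayleighInf E * ⟪u, v⟫`, again as
points `(u, D u)` of the graph `E` of `D`. -/
def groundStates (E : Submodule ℝ (F × G)) : Submodule ℝ (F × G) where
  carrier := {w | w ∈ E ∧ ∀ v ∈ E, ⟪w.2, v.2⟫ = rayleighInf E * ⟪w.1, v.1⟫}
  zero_mem' := ⟨E.zero_mem, fun v _ => by simp⟩
  add_mem' h h' := ⟨E.add_mem h.1 h'.1, fun v hv => by
    simp only [Prod.fst_add, Prod.snd_add, inner_add_left, h.2 v hv, h'.2 v hv, mul_add]⟩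
  smul_mem' c w h := ⟨E.smul_mem c h.1, fun v hv => by
    simp only [Prod.smul_fst, Prod.smul_snd, real_inner_smul_left, h.2 v hv]; ring⟩

lemma rayleighInf_nonneg : 0 ≤ rayleighInf E :=
  Real.sInf_nonneg <| by rintro _ ⟨w, -, -, rfl⟩; positivity

lemma rayleighInf_mul_le {w : F × G} (hw : w ∈ E) : rayleighInf E * ‖w.1‖ ^ 2 ≤ ‖w.2‖ ^ 2 := by
  rcases eq_or_ne ‖w.1‖ 0 with h0 | h0
  · rw [h0, zero_pow two_ne_zero, mul_zero]; positivity
  have hle : rayleighInf E ≤ ‖(‖w.1‖⁻¹ • w).2‖ ^ 2 := by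
    refine csInf_le ⟨0, ?_⟩ ⟨_, E.smul_mem ‖w.1‖⁻¹ hw, ?_, rfl⟩
    · rintro _ ⟨w, -, -, rfl⟩; positivity
    · rw [Prod.smul_fst, norm_smul, norm_inv, norm_norm, inv_mul_cancel₀ h0]
  rw [Prod.smul_snd, norm_smul, norm_inv, norm_norm, mul_pow, inv_pow] at hle
  exact (le_inv_mul_iff₀' (by positivity)).1 hle

lemma eq_zero_of_forall_nonneg_quadratic {b c : ℝ} (h : ∀ t : ℝ, 0 ≤ b * t + c * t ^ 2) :
    b = 0 := by
  have := discrim_le_zero (a := c) (b := b) (c := 0) fun t => by linarith [h t, sq t]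
  simp only [discrim, mul_zero, sub_zero] at this
  exact pow_eq_zero_iff two_ne_zero |>.1 (this.antisymm (sq_nonneg b))

lemma mem_groundStates_of_le {w : F × G} (hw : w ∈ E)
    (hle : ‖w.2‖ ^ 2 ≤ rayleighInf E * ‖w.1‖ ^ 2) : w ∈ groundStates E := by
  refine ⟨hw, fun v hv => ?_⟩
  have hvar : ∀ t : ℝ, 0 ≤ 2 * (⟪w.2, v.2⟫ - rayleighInf E * ⟪w.1, v.1⟫) * t +
      (‖v.2‖ ^ 2 - rayleighInf E * ‖v.1‖ ^ 2) * t ^ 2 := fun t => by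
    have h := rayleighInf_mul_le (E.add_mem hw (E.smul_mem t hv))
    simp only [Prod.fst_add, Prod.snd_add, Prod.smul_fst, Prod.smul_snd, norm_add_sq_real,
      real_inner_smul_right, norm_smul, mul_pow, Real.norm_eq_abs, sq_abs] at h
    linarith
  linarith [eq_zero_of_forall_nonneg_quadratic hvar]

lemma norm_sq_eq_of_mem_groundStates {w : F × G} (hw : w ∈ groundStates E) :
    ‖w.2‖ ^ 2 = rayleighInf E * ‖w.1‖ ^ 2 := by
  rw [← real_inner_self_eq_norm_sq, ← real_inner_self_eq_norm_sq, hw.2 w hw.1]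

/-- A minimizing sequence, normalized in `F`, converges in `G` as soon as it converges in `F`: this
is the parallelogram law. -/
lemma cauchySeq_snd_of_minimizing {w : ℕ → F × G} (hE : ∀ n, w n ∈ E) (h1 : ∀ n, ‖(w n).1‖ = 1)
    (hmin : Tendsto (fun n => ‖(w n).2‖ ^ 2) atTop (𝓝 (rayleighInf E)))
    {f : F} (hf : Tendsto (fun n => (w n).1) atTop (𝓝 f)) : CauchySeq fun n => (w n).2 := by
  have hf1 : ‖f‖ = 1 := tendsto_nhds_unique hf.norm (by simp only [h1, tendsto_const_nhds])
  rw [cauchySeq_iff_tendsto_dist_atTop_0, ← prod_atTop_atTop_eq]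
  have hbound : Tendsto (fun n : ℕ × ℕ => 2 * ‖(w n.1).2‖ ^ 2 + 2 * ‖(w n.2).2‖ ^ 2 -
      rayleighInf E * ‖(w n.1).1 + (w n.2).1‖ ^ 2) (atTop ×ˢ atTop) (𝓝 0) := by
    have h := (((hmin.comp tendsto_fst).const_mul 2).add ((hmin.comp tendsto_snd).const_mul 2)).sub
      ((((hf.comp tendsto_fst).add (hf.comp tendsto_snd)).norm.pow 2).const_mul (rayleighInf E))
    have h0 : 2 * rayleighInf E + 2 * rayleighInf E - rayleighInf E * ‖f + f‖ ^ 2 = 0 := by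
      rw [← two_smul ℝ f, norm_smul, hf1, Real.norm_ofNat]; ring
    rw [h0] at h
    exact h
  have hsq := squeeze_zero (fun n : ℕ × ℕ => sq_nonneg ‖(w n.1).2 - (w n.2).2‖) (fun n => by
    have hl := rayleighInf_mul_le (E.add_mem (hE n.1) (hE n.2))
    have hp := parallelogram_law_with_norm ℝ (w n.1).2 (w n.2).2
    simp only [Prod.fst_add, Prod.snd_add] at hl
    linarith) hbound
  simpa only [dist_eq_norm, Real.sqrt_sq (norm_nonneg _), Real.sqrt_zero] using hsq.sqrt

lemma exists_minimizing_seq (hne : ∃ w ∈ E, w.1 ≠ 0) :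
    ∃ w : ℕ → F × G, (∀ n, w n ∈ E) ∧ (∀ n, ‖(w n).1‖ = 1) ∧
      Tendsto (fun n => ‖(w n).2‖ ^ 2) atTop (𝓝 (rayleighInf E)) := by
  obtain ⟨w₀, hw₀, h0⟩ := hne
  obtain ⟨r, -, hr, hmem⟩ := exists_seq_tendsto_sInf
    (S := {r | ∃ w ∈ E, ‖w.1‖ = 1 ∧ r = ‖w.2‖ ^ 2})
    ⟨_, ‖w₀.1‖⁻¹ • w₀, E.smul_mem _ hw₀, by
      rw [Prod.smul_fst, norm_smul, norm_inv, norm_norm, inv_mul_cancel₀ (norm_ne_zero_iff.2 h0)],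
      rfl⟩ ⟨0, by rintro _ ⟨w, -, -, rfl⟩; positivity⟩
  choose w hE h1 hw using hmem
  exact ⟨w, hE, h1, hr.congr hw⟩

lemma exists_mem_groundStates [CompleteSpace G] (hE : IsClosed (E : Set (F × G)))
    (hcpt : IsCompactOperator ((LinearMap.fst ℝ F G).domRestrict E))
    (hne : ∃ w ∈ E, w.1 ≠ 0) : ∃ w ∈ groundStates E, w.1 ≠ 0 := by
  obtain ⟨w, hwE, h1, hmin⟩ := exists_minimizing_seq hne
  obtain ⟨R, hR⟩ := hmin.bddAbove_range
  have hbdd : Bornology.IsBounded (range fun n => (⟨w n, hwE n⟩ : E)) := by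
    refine isBounded_iff_forall_norm_le.2 ⟨max 1 (√R), ?_⟩
    rintro _ ⟨n, rfl⟩
    exact max_le_max (h1 n).le (Real.le_sqrt_of_sq_le (hR ⟨n, rfl⟩))
  obtain ⟨f, -, σ, hσ, hf⟩ := (hcpt.isCompact_closure_image_of_bounded hbdd).tendsto_subseq
    (x := fun n => (w n).1) fun n => subset_closure ⟨_, ⟨n, rfl⟩, rfl⟩
  obtain ⟨g, hg⟩ := cauchySeq_tendsto_of_complete <| cauchySeq_snd_of_minimizing
    (fun n => hwE (σ n)) (fun n => h1 (σ n)) (hmin.comp hσ.tendsto_atTop) hf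
  have hfg : (f, g) ∈ E :=
    hE.mem_of_tendsto (hf.prodMk_nhds hg) (Eventually.of_forall fun n => hwE (σ n))
  have hf1 : ‖f‖ = 1 :=
    tendsto_nhds_unique hf.norm (by simp only [Function.comp_apply, h1, tendsto_const_nhds])
  have hg1 : ‖g‖ ^ 2 = rayleighInf E :=
    tendsto_nhds_unique (hg.norm.pow 2) (hmin.comp hσ.tendsto_atTop)
  exact ⟨(f, g), mem_groundStates_of_le hfg (by simp only [hf1, hg1, one_pow, mul_one, le_refl]),
    norm_ne_zero_iff.1 (hf1 ▸ one_ne_zero)⟩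

end Variational

lemma isCompactOperator_of_forall_norm_sq_le {E F : Type*} [NormedAddCommGroup E]
    [NormedSpace ℝ E] [NormedAddCommGroup F] [NormedSpace ℝ F] [CompleteSpace F] (J : E →ₗ[ℝ] F)
    (h : ∀ ε : ℝ, 0 < ε → ∃ (ι : Type) (_ : Fintype ι) (ℓ : ι → StrongDual ℝ E),
      ∀ w, ‖J w‖ ^ 2 ≤ ε * ‖w‖ ^ 2 + ∑ i, ℓ i w ^ 2) : IsCompactOperator J := by
  refine (isCompactOperator_iff_isCompact_closure_image_ball J one_pos).2
    (TotallyBounded.isCompact_of_isClosed (TotallyBounded.closure ?_) isClosed_closure)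
  refine Metric.totallyBounded_iff.2 fun δ hδ => ?_
  obtain ⟨ι, _, ℓ, hℓ⟩ := h (δ ^ 2 / 8) (by positivity)
  let T : E →L[ℝ] EuclideanSpace ℝ ι :=
    (EuclideanSpace.equiv ι ℝ).symm.toContinuousLinearMap ∘L ContinuousLinearMap.pi ℓ
  have hT : ∀ w, ∑ i, ℓ i w ^ 2 = ‖T w‖ ^ 2 := fun w => (EuclideanSpace.real_norm_sq_eq (T w)).symm
  simp only [hT] at hℓ
  have hbdd : Bornology.IsBounded (T '' Metric.ball 0 1) :=
    T.lipschitz.isBounded_image Metric.isBounded_ball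
  have hTB : TotallyBounded (T '' Metric.ball 0 1) :=
    hbdd.isCompact_closure.totallyBounded.subset subset_closure
  obtain ⟨t, ht, htfin, hcover⟩ :=
    Metric.finite_approx_of_totallyBounded hTB (δ / 2) (by positivity)
  obtain ⟨s, hs, hsfin, rfl⟩ := exists_subset_image_finite_and.1 ⟨t, ht, htfin, rfl⟩
  refine ⟨J '' s, hsfin.image J, ?_⟩
  rintro _ ⟨w, hw, rfl⟩
  obtain ⟨_, ⟨v, hv, rfl⟩, hwv⟩ := mem_iUnion₂.1 (hcover (mem_image_of_mem T hw))
  refine mem_iUnion₂.2 ⟨J v, mem_image_of_mem J hv, ?_⟩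
  have hwv' : ‖w - v‖ ≤ 2 := by
    have := norm_sub_le w v
    linarith [mem_ball_zero_iff.1 hw, mem_ball_zero_iff.1 (hs hv)]
  rw [Metric.mem_ball, dist_eq_norm, ← map_sub] at hwv ⊢
  refine lt_of_pow_lt_pow_left₀ 2 hδ.le ?_
  calc ‖J (w - v)‖ ^ 2 ≤ δ ^ 2 / 8 * ‖w - v‖ ^ 2 + ‖T (w - v)‖ ^ 2 := hℓ _
    _ ≤ δ ^ 2 / 8 * 2 ^ 2 + (δ / 2) ^ 2 := by gcongr
    _ < δ ^ 2 := by linarith [pow_pos hδ 2]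

section Lattice

variable {X : Type*} [MeasurableSpace X] {μ : Measure X} {K : Submodule ℝ (Lp ℝ 2 μ)}

lemma Lp_two_norm_sq (f : Lp ℝ 2 μ) : ‖f‖ ^ 2 = ∫ x, f x ^ 2 ∂μ := by
  rw [← real_inner_self_eq_norm_sq, L2.inner_def]
  simp only [real_inner_self_eq_norm_sq, Real.norm_eq_abs, sq_abs]

lemma Lp_two_inner (f g : Lp ℝ 2 μ) : ⟪f, g⟫ = ∫ x, f x * g x ∂μ := by
  simp only [L2.inner_def, RCLike.inner_apply, conj_trivial, mul_comm]

lemma ae_pos_or_ae_neg_of_abs_mem (habs : ∀ f ∈ K, |f| ∈ K)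
    (hpos : ∀ f ∈ K, 0 ≤ f → f ≠ 0 → ∀ᵐ x ∂μ, 0 < f x) {f : Lp ℝ 2 μ} (hf : f ∈ K) (h0 : f ≠ 0) :
    (∀ᵐ x ∂μ, 0 < f x) ∨ ∀ᵐ x ∂μ, f x < 0 := by
  have hplus : |f| + f ∈ K := K.add_mem (habs f hf) hf
  by_cases hle : |f| + f = 0
  · right
    have hneg : 0 ≤ -f := (abs_nonneg f).trans_eq (eq_neg_of_add_eq_zero_left hle)
    filter_upwards [hpos (-f) (K.neg_mem hf) hneg (neg_ne_zero.2 h0), Lp.coeFn_neg f] with x hx h'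
    rw [h', Pi.neg_apply] at hx
    exact neg_pos.1 hx
  · left
    have hnn : 0 ≤ |f| + f := neg_le_iff_add_nonneg.1 (neg_le_abs f)
    filter_upwards [hpos _ hplus hnn hle, Lp.coeFn_add |f| f, Lp.coeFn_abs f] with x hx ha hb
    rw [ha, Pi.add_apply, hb] at hx
    by_contra! hx0
    rw [abs_of_nonpos hx0] at hx
    linarith

lemma eq_zero_of_inner_eq_zero_of_ae_pos {f g : Lp ℝ 2 μ} (hf : ∀ᵐ x ∂μ, 0 < f x)
    (hg : ∀ᵐ x ∂μ, 0 < g x) (hfg : ⟪f, g⟫ = 0) : f = 0 := by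
  have hmul : ∀ᵐ x ∂μ, 0 < f x * g x := by
    filter_upwards [hf, hg] with x hfx hgx using mul_pos hfx hgx
  rw [Lp_two_inner, integral_eq_zero_iff_of_nonneg_ae (hmul.mono fun _ => le_of_lt)
    ((Lp.memLp f).integrable_mul (Lp.memLp g))] at hfg
  refine Lp.eq_zero_iff_ae_eq_zero.2 ?_
  filter_upwards [hmul, hfg] with x hx h0
  exact absurd h0 hx.ne'

lemma exists_eq_smul_of_abs_mem (habs : ∀ f ∈ K, |f| ∈ K)
    (hpos : ∀ f ∈ K, 0 ≤ f → f ≠ 0 → ∀ᵐ x ∂μ, 0 < f x) {f g : Lp ℝ 2 μ} (hf : f ∈ K) (hg : g ∈ K)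
    (hgpos : ∀ᵐ x ∂μ, 0 < g x) : ∃ c : ℝ, f = c • g := by
  set h := f - (⟪f, g⟫ / ⟪g, g⟫) • g with hh
  have horth : ⟪h, g⟫ = 0 := by
    rw [hh, inner_sub_left, real_inner_smul_left, div_mul_cancel_of_imp, sub_self]
    intro h0
    rw [inner_self_eq_zero.1 h0, inner_zero_right]
  refine ⟨⟪f, g⟫ / ⟪g, g⟫, sub_eq_zero.1 (by_contra fun hne => hne ?_)⟩
  rcases ae_pos_or_ae_neg_of_abs_mem habs hpos (K.sub_mem hf (K.smul_mem _ hg)) hne with hs | hs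
  · exact eq_zero_of_inner_eq_zero_of_ae_pos hs hgpos horth
  · refine neg_eq_zero.1 (eq_zero_of_inner_eq_zero_of_ae_pos (f := -h) ?_ hgpos ?_)
    · filter_upwards [hs, Lp.coeFn_neg h] with x hx h'
      rw [h', Pi.neg_apply]
      exact neg_pos.2 hx
    · rw [inner_neg_left, horth, neg_zero]

lemma integrable_sq_mul_Lp {g : X → ℝ} {C : ℝ} (hgm : AEStronglyMeasurable g μ)
    (hg : ∀ᵐ x ∂μ, |g x| ≤ C) (f : Lp ℝ 2 μ) : Integrable (fun x => (g x * f x) ^ 2) μ := by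
  refine ((Lp.memLp f).of_le_mul (c := C) (hgm.mul (Lp.aestronglyMeasurable f)) ?_).integrable_sq
  filter_upwards [hg] with x hx
  rw [Pi.mul_apply, norm_mul]
  exact mul_le_mul_of_nonneg_right hx (norm_nonneg _)

lemma norm_sub_sq_le_of_ae_eq_mul {g g' : X → ℝ} {C : ℝ} (hgm : AEStronglyMeasurable g μ)
    (hg'm : AEStronglyMeasurable g' μ) (hg : ∀ᵐ x ∂μ, |g x| ≤ C) (hg' : ∀ᵐ x ∂μ, |g' x| ≤ C)
    {f f' F F' : Lp ℝ 2 μ} (hF : F =ᵐ[μ] fun x => g x * f x)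
    (hF' : F' =ᵐ[μ] fun x => g' x * f' x) :
    ‖F - F'‖ ^ 2 ≤ 2 * C ^ 2 * ‖f - f'‖ ^ 2 + 2 * ∫ x, ((g x - g' x) * f' x) ^ 2 ∂μ := by
  have hsub : ∀ᵐ x ∂μ, |g x - g' x| ≤ C + C := by
    filter_upwards [hg, hg'] with x h h' using (abs_sub _ _).trans (add_le_add h h')
  have hint : Integrable (fun x => 2 * ((g x - g' x) * f' x) ^ 2) μ :=
    (integrable_sq_mul_Lp (hgm.sub hg'm) hsub f').const_mul 2
  have hint' := (Lp.memLp (f - f')).integrable_sq.const_mul (2 * C ^ 2)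
  rw [Lp_two_norm_sq, Lp_two_norm_sq, ← integral_const_mul, ← integral_const_mul,
    ← integral_add hint' hint]
  refine integral_mono_ae (Lp.memLp (F - F')).integrable_sq (hint'.add hint) ?_
  filter_upwards [hg, hF, hF', Lp.coeFn_sub F F', Lp.coeFn_sub f f'] with x hgx hFx hFx' hs hs'
  have hC : g x ^ 2 ≤ C ^ 2 := sq_le_sq' (neg_le_of_abs_le hgx) (le_of_abs_le hgx)
  simp only [hs, hs', Pi.sub_apply, hFx, hFx']
  nlinarith [sq_nonneg (g x * (f x - f' x) - (g x - g' x) * f' x),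
    mul_le_mul_of_nonneg_right hC (sq_nonneg (f x - f' x))]

lemma tendsto_Lp_two_mul_of_tendsto_ae {g : ℕ → X → ℝ} {g' : X → ℝ} {C : ℝ}
    (hgm : ∀ n, AEStronglyMeasurable (g n) μ) (hC : ∀ n, ∀ᵐ x ∂μ, |g n x| ≤ C)
    (hg : ∀ᵐ x ∂μ, Tendsto (fun n => g n x) atTop (𝓝 (g' x)))
    {f : ℕ → Lp ℝ 2 μ} {f' : Lp ℝ 2 μ} (hf : Tendsto f atTop (𝓝 f')) {F : ℕ → Lp ℝ 2 μ}
    {F' : Lp ℝ 2 μ} (hF : ∀ n, F n =ᵐ[μ] fun x => g n x * f n x)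
    (hF' : F' =ᵐ[μ] fun x => g' x * f' x) : Tendsto F atTop (𝓝 F') := by
  have hg'm : AEStronglyMeasurable g' μ := aestronglyMeasurable_of_tendsto_ae atTop hgm hg
  have hC' : ∀ᵐ x ∂μ, |g' x| ≤ C := by
    filter_upwards [hg, ae_all_iff.2 hC] with x hx hCx
    exact le_of_tendsto hx.abs (Eventually.of_forall hCx)
  have hdom : Tendsto (fun n => ∫ x, ((g n x - g' x) * f' x) ^ 2 ∂μ) atTop (𝓝 0) := by
    rw [← integral_zero X ℝ (μ := μ)]
    refine tendsto_integral_of_dominated_convergence (fun x => ((C + C) * f' x) ^ 2)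
      (fun n => (((hgm n).sub hg'm).mul (Lp.aestronglyMeasurable f')).pow 2)
      ((Lp.memLp f').const_mul (C + C)).integrable_sq (fun n => ?_) ?_
    · filter_upwards [hC n, hC'] with x hx hx'
      rw [Real.norm_eq_abs, abs_pow, sq_abs, mul_pow, mul_pow (C + C)]
      exact mul_le_mul_of_nonneg_right (sq_le_sq.2 (((abs_sub _ _).trans (add_le_add hx hx')).trans
        (le_abs_self _))) (sq_nonneg _)
    · filter_upwards [hg] with x hx
      simpa using (((hx.sub_const (g' x)).mul_const (f' x)).pow 2)
  rw [tendsto_iff_norm_sub_tendsto_zero] at hf ⊢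
  have hlim := squeeze_zero (fun n => sq_nonneg ‖F n - F'‖)
    (fun n => norm_sub_sq_le_of_ae_eq_mul (hgm n) hg'm (hC n) hC' (hF n) hF')
    (by simpa using ((hf.pow 2).const_mul (2 * C ^ 2)).add (hdom.const_mul 2))
  simpa only [Real.sqrt_sq (norm_nonneg _), Real.sqrt_zero] using hlim.sqrt

end Lattice

/-! ### A Poincaré inequality on small squares -/

section ProductPoincare

variable {X Y : Type*} [MeasurableSpace X] [MeasurableSpace Y] {μ : Measure X} {ν : Measure Y}
  [IsFiniteMeasure μ] [IsFiniteMeasure ν] {h : ℝ} {f : X × Y → ℝ} {P : Y → ℝ} {R : X → ℝ}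

lemma sq_integral_mul_le {f g : X → ℝ} {μ : Measure X} (hf : MemLp f 2 μ) (hg : MemLp g 2 μ) :
    (∫ x, f x * g x ∂μ) ^ 2 ≤ (∫ x, f x ^ 2 ∂μ) * ∫ x, g x ^ 2 ∂μ := by
  have hcs := real_inner_mul_inner_self_le (hf.toLp f) (hg.toLp g)
  have hrep : ∀ {f g : X → ℝ} (hf : MemLp f 2 μ) (hg : MemLp g 2 μ),
      ⟪hf.toLp f, hg.toLp g⟫ = ∫ x, f x * g x ∂μ := fun hf hg => by
    rw [Lp_two_inner]
    refine integral_congr_ae ?_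
    filter_upwards [hf.coeFn_toLp, hg.coeFn_toLp] with x h1 h2
    rw [h1, h2]
  simpa only [hrep, ← sq] using hcs

lemma abs_sub_integral_div_le (hμ : μ.real univ = h) (hh : 0 < h) {f g : X → ℝ} {c : ℝ}
    (hf : Integrable f μ) (hg : Integrable g μ) (hcfg : ∀ᵐ x ∂μ, |c - f x| ≤ g x) :
    |c - (∫ x, f x ∂μ) / h| ≤ (∫ x, g x ∂μ) / h := by
  have hc : c - (∫ x, f x ∂μ) / h = (∫ x, (c - f x) ∂μ) / h := by
    rw [integral_sub (integrable_const c) hf, integral_const, hμ, smul_eq_mul]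
    field_simp
  rw [hc, abs_div, abs_of_pos hh]
  gcongr
  exact norm_integral_le_of_norm_le (f := fun x => c - f x) hg hcfg

lemma integral_sub_mean_sq (hμ : μ.real univ = h) (hh : 0 < h) {f : X → ℝ} (hf : MemLp f 2 μ) :
    ∫ x, (f x - (∫ x, f x ∂μ) / h) ^ 2 ∂μ = ∫ x, f x ^ 2 ∂μ - (∫ x, f x ∂μ) ^ 2 / h := by
  have hfi : Integrable f μ := hf.integrable (by norm_num)
  set m := (∫ x, f x ∂μ) / h with hm
  have hsq : ∀ x, (f x - m) ^ 2 = f x ^ 2 - (2 * m * f x - m ^ 2) := fun x => by ring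
  have hlin : Integrable (fun x => 2 * m * f x - m ^ 2) μ :=
    (hfi.const_mul _).sub (integrable_const _)
  simp_rw [hsq]
  rw [integral_sub hf.integrable_sq hlin, integral_sub (hfi.const_mul _) (integrable_const _),
    integral_const_mul, integral_const, hμ,
    smul_eq_mul, hm]
  field_simp
  ring

lemma integral_const_add_fst (hμ : μ.real univ = h) (hν : ν.real univ = h) (hR : Integrable R μ)
    (c : ℝ) : ∫ z : X × Y, (c + R z.1) ∂μ.prod ν = h ^ 2 * c + h * ∫ x, R x ∂μ := by
  rw [integral_add (integrable_const _) (hR.comp_fst ν), integral_const, integral_fun_fst, hν,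
    ← univ_prod_univ, measureReal_prod_prod, hμ, hν, smul_eq_mul, smul_eq_mul, ← sq]

lemma integral_const_add_snd (hμ : μ.real univ = h) (hν : ν.real univ = h) (hP : Integrable P ν)
    (c : ℝ) : ∫ z : X × Y, (c + P z.2) ∂μ.prod ν = h ^ 2 * c + h * ∫ y, P y ∂ν := by
  rw [integral_add (integrable_const _) (hP.comp_snd μ), integral_const, integral_fun_snd, hμ,
    ← univ_prod_univ, measureReal_prod_prod, hμ, hν, smul_eq_mul, smul_eq_mul, ← sq]

/-- Along the two coordinate paths joining `z` to `z'` the oscillation of `f` splits into a function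
of `z.2` plus one of `z'.1`, and into a function of `z.1` plus one of `z'.2`. Averaging over `z'`
bounds `f z - m` in two ways, and the product of the two bounds has separated variables. -/
lemma integral_sq_le_of_osc_le (hμ : μ.real univ = h) (hν : ν.real univ = h) (hh : 0 < h)
    (hf : MemLp f 2 (μ.prod ν)) (hP : Integrable P ν) (hR : Integrable R μ)
    (hosc : ∀ᵐ z ∂μ.prod ν, ∀ᵐ z' ∂μ.prod ν,
      |f z - f z'| ≤ P z.2 + R z'.1 ∧ |f z - f z'| ≤ R z.1 + P z'.2) :
    ∫ z, f z ^ 2 ∂μ.prod ν ≤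
      (∫ y, P y ∂ν + ∫ x, R x ∂μ) ^ 2 + (∫ z, f z ∂μ.prod ν) ^ 2 / h ^ 2 := by
  have hmass : (μ.prod ν).real univ = h ^ 2 := by
    rw [← univ_prod_univ, measureReal_prod_prod, hμ, hν, sq]
  have hfi : Integrable f (μ.prod ν) := hf.integrable (by norm_num)
  set m := (∫ z, f z ∂μ.prod ν) / h ^ 2 with hm
  set A := ∫ y, P y ∂ν
  set B := ∫ x, R x ∂μ
  have hmean : ∀ᵐ z ∂μ.prod ν, (f z - m) ^ 2 ≤ (R z.1 + A / h) * (P z.2 + B / h) := by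
    filter_upwards [hosc] with z hz
    have hy := abs_sub_integral_div_le hmass (by positivity) hfi
      ((integrable_const (P z.2)).add (hR.comp_fst ν)) (hz.mono fun _ => And.left)
    have hx := abs_sub_integral_div_le hmass (by positivity) hfi
      ((integrable_const (R z.1)).add (hP.comp_snd μ)) (hz.mono fun _ => And.right)
    simp only [Pi.add_apply, integral_const_add_fst hμ hν hR] at hy
    simp only [Pi.add_apply, integral_const_add_snd hμ hν hP] at hx
    calc (f z - m) ^ 2 = |f z - m| * |f z - m| := by rw [← sq, sq_abs]
      _ ≤ ((h ^ 2 * R z.1 + h * A) / h ^ 2) * ((h ^ 2 * P z.2 + h * B) / h ^ 2) :=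
        mul_le_mul hx hy (abs_nonneg _) ((abs_nonneg _).trans hx)
      _ = _ := by field_simp
  have hint := integral_mono_ae (hf.sub (memLp_const m)).integrable_sq
    ((hR.add (integrable_const (A / h))).mul_prod (hP.add (integrable_const (B / h)))) hmean
  have hprod : ∫ z : X × Y, (R z.1 + A / h) * (P z.2 + B / h) ∂μ.prod ν = (A + B) ^ 2 := by
    rw [integral_prod_mul (fun x => R x + A / h) fun y => P y + B / h,
      integral_add hR (integrable_const _), integral_add hP (integrable_const _), integral_const,
      integral_const, hμ, hν, smul_eq_mul, smul_eq_mul, mul_div_cancel₀ _ hh.ne',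
      mul_div_cancel₀ _ hh.ne']
    ring
  simp only [Pi.sub_apply, Pi.add_apply, hprod, hm,
    integral_sub_mean_sq hmass (by positivity) hf] at hint
  linarith

end ProductPoincare

/-- The half-open square `(a, a+h] × (b, b+h]`. -/
def square (a b h : ℝ) : Set (ℝ × ℝ) := Ioc a (a + h) ×ˢ Ioc b (b + h)

lemma measurableSet_square (a b h : ℝ) : MeasurableSet (square a b h) :=
  measurableSet_Ioc.prod measurableSet_Ioc

lemma volume_restrict_square (a b h : ℝ) : (volume.restrict (square a b h) : Measure (ℝ × ℝ)) =
    (volume.restrict (Ioc a (a + h))).prod (volume.restrict (Ioc b (b + h))) := by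
  rw [Measure.prod_restrict]; rfl

instance (a b h : ℝ) : IsFiniteMeasure (volume.restrict (square a b h)) := by
  rw [volume_restrict_square]
  infer_instance

lemma memLp_square_of_continuous {f : ℝ × ℝ → ℝ} (hf : Continuous f) (a b h : ℝ) (p : ℝ≥0∞) :
    MemLp f p (volume.restrict (square a b h)) := by
  obtain ⟨C, hC⟩ := (isCompact_Icc.prod isCompact_Icc :
    IsCompact (Icc a (a + h) ×ˢ Icc b (b + h))).exists_bound_of_continuousOn hf.continuousOn
  refine MemLp.of_bound hf.aestronglyMeasurable C ?_
  filter_upwards [ae_restrict_mem (measurableSet_square a b h)] with z hz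
  exact hC z (prod_mono Ioc_subset_Icc_self Ioc_subset_Icc_self hz)

lemma abs_sub_le_integral_abs_deriv {f f' : ℝ → ℝ} (hf : ∀ t, HasDerivAt f (f' t) t)
    (hf' : Continuous f') {a b x y : ℝ} (hx : x ∈ Ioc a b) (hy : y ∈ Ioc a b) :
    |f x - f y| ≤ ∫ t in Ioc a b, |f' t| := by
  wlog hxy : y ≤ x generalizing x y
  · rw [abs_sub_comm]; exact this hy hx (le_of_not_ge hxy)
  rw [← intervalIntegral.integral_eq_sub_of_hasDerivAt (fun t _ => hf t)
    (hf'.intervalIntegrable y x)]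
  refine (intervalIntegral.abs_integral_le_integral_abs hxy).trans ?_
  rw [intervalIntegral.integral_of_le hxy]
  exact setIntegral_mono_set hf'.abs.integrableOn_Ioc (ae_of_all _ fun _ => abs_nonneg _)
    (Ioc_subset_Ioc hy.1.le hx.2).eventuallyLE

section Plane

variable {φ : ℝ × ℝ → ℝ}

lemma hasDerivAt_pdx (hφ : ContDiff ℝ 1 φ) (y t : ℝ) :
    HasDerivAt (fun s => φ (s, y)) (pdx φ (t, y)) t :=
  (hφ.differentiable one_ne_zero _).hasFDerivAt.comp_hasDerivAt t
    ((hasDerivAt_id t).prodMk (hasDerivAt_const t y))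

lemma hasDerivAt_pdy (hφ : ContDiff ℝ 1 φ) (x t : ℝ) :
    HasDerivAt (fun s => φ (x, s)) (pdy φ (x, t)) t :=
  (hφ.differentiable one_ne_zero _).hasFDerivAt.comp_hasDerivAt t
    ((hasDerivAt_const t x).prodMk (hasDerivAt_id t))

lemma continuous_pdx (hφ : ContDiff ℝ 1 φ) : Continuous (pdx φ) :=
  (hφ.continuous_fderiv one_ne_zero).clm_apply continuous_const

lemma continuous_pdy (hφ : ContDiff ℝ 1 φ) : Continuous (pdy φ) :=
  (hφ.continuous_fderiv one_ne_zero).clm_apply continuous_const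

lemma integral_square_sq_le (hφ : ContDiff ℝ 1 φ) (a b : ℝ) {h : ℝ} (hh : 0 < h) :
    ∫ p in square a b h, φ p ^ 2 ≤
      ((∫ p in square a b h, |pdx φ p|) + ∫ p in square a b h, |pdy φ p|) ^ 2 +
        (∫ p in square a b h, φ p) ^ 2 / h ^ 2 := by
  have hlen : ∀ c : ℝ, (volume.restrict (Ioc c (c + h))).real univ = h := fun c => by
    rw [measureReal_restrict_apply_univ, Real.volume_real_Ioc, add_sub_cancel_left,
      max_eq_left hh.le]
  have hX : Integrable (fun p => |pdx φ p|) (volume.restrict (square a b h)) :=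
    ((memLp_square_of_continuous (continuous_pdx hφ) a b h 1).integrable le_rfl).abs
  have hY : Integrable (fun p => |pdy φ p|) (volume.restrict (square a b h)) :=
    ((memLp_square_of_continuous (continuous_pdy hφ) a b h 1).integrable le_rfl).abs
  have hφ2 := memLp_square_of_continuous hφ.continuous a b h 2
  have hmem : ∀ᵐ z ∂volume.restrict (square a b h), z ∈ square a b h :=
    ae_restrict_mem (measurableSet_square a b h)
  have hoscX : ∀ z ∈ square a b h, ∀ z' ∈ square a b h, ∀ y,
      |φ (z.1, y) - φ (z'.1, y)| ≤ ∫ t in Ioc a (a + h), |pdx φ (t, y)| := fun z hz z' hz' y =>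
    abs_sub_le_integral_abs_deriv (hasDerivAt_pdx hφ y)
      ((continuous_pdx hφ).comp (Continuous.prodMk_left y)) hz.1 hz'.1
  have hoscY : ∀ z ∈ square a b h, ∀ z' ∈ square a b h, ∀ x,
      |φ (x, z.2) - φ (x, z'.2)| ≤ ∫ t in Ioc b (b + h), |pdy φ (x, t)| := fun z hz z' hz' x =>
    abs_sub_le_integral_abs_deriv (hasDerivAt_pdy hφ x)
      ((continuous_pdy hφ).comp (Continuous.prodMk_right x)) hz.2 hz'.2
  rw [volume_restrict_square] at *
  rw [integral_prod_symm _ hX, integral_prod _ hY]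
  refine integral_sq_le_of_osc_le (hlen a) (hlen b) hh hφ2 hX.integral_prod_right
    hY.integral_prod_left ?_
  filter_upwards [hmem] with z hz
  filter_upwards [hmem] with z' hz'
  exact ⟨(abs_sub_le _ (φ (z'.1, z.2)) _).trans
      (add_le_add (hoscX z hz z' hz' z.2) (hoscY z hz z' hz' z'.1)),
    (abs_sub_le _ (φ (z.1, z'.2)) _).trans
      (add_le_add (hoscY z hz z' hz' z.1) (hoscX z hz z' hz' z'.2))⟩

end Plane

lemma sq_integral_abs_le_of_weight {X : Type*} [MeasurableSpace X] {μ : Measure X} {w g : X → ℝ}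
    (hw : ∀ᵐ x ∂μ, w x ≠ 0) (hwinv : MemLp (fun x => (w x)⁻¹) 2 μ)
    (hwg : MemLp (fun x => w x * g x) 2 μ) :
    (∫ x, |g x| ∂μ) ^ 2 ≤ (∫ x, (w x)⁻¹ ^ 2 ∂μ) * ∫ x, (w x * g x) ^ 2 ∂μ := by
  have habs : ∫ x, |g x| ∂μ = ∫ x, |(w x)⁻¹| * |w x * g x| ∂μ := by
    refine integral_congr_ae (hw.mono fun x hx => ?_)
    simp only [← abs_mul, inv_mul_cancel_left₀ hx]
  have hcs := sq_integral_mul_le hwinv.abs hwg.abs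
  simp only [Pi.abs_apply, sq_abs] at hcs
  rwa [habs]

lemma integrableOn_inv_rpow_sq {α : ℝ} (hα : α < 1 / 2) :
    IntegrableOn (fun t : ℝ => (t ^ α)⁻¹ ^ 2) (Ioc 0 1) ∧
      ∫ t in Ioc (0 : ℝ) 1, (t ^ α)⁻¹ ^ 2 = 1 / (1 - 2 * α) := by
  have hpow : EqOn (fun t : ℝ => t ^ (-(2 * α))) (fun t => (t ^ α)⁻¹ ^ 2) (Ioc 0 1) :=
      fun t ht => by
    simp only [← Real.rpow_neg ht.1.le, ← Real.rpow_mul_natCast ht.1.le]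
    congr 1; push_cast; ring
  have hint := intervalIntegral.intervalIntegrable_rpow' (a := 0) (b := 1)
    (by linarith : -1 < -(2 * α))
  rw [intervalIntegrable_iff_integrableOn_Ioc_of_le zero_le_one] at hint
  refine ⟨hint.congr_fun hpow measurableSet_Ioc, ?_⟩
  rw [← setIntegral_congr_fun measurableSet_Ioc hpow,
    ← intervalIntegral.integral_of_le zero_le_one, integral_rpow (Or.inl (by linarith)),
    Real.one_rpow, Real.zero_rpow (by linarith)]
  congr 1 <;> ring

lemma integral_inv_rpow_sq_le {α : ℝ} (hα : α < 1 / 2) {s : Set ℝ} (hs : s ⊆ Ioc 0 1) :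
    ∫ t in s, (t ^ α)⁻¹ ^ 2 ≤ 1 / (1 - 2 * α) := by
  rw [← (integrableOn_inv_rpow_sq hα).2]
  exact setIntegral_mono_set (integrableOn_inv_rpow_sq hα).1 (ae_of_all _ fun _ => sq_nonneg _)
    hs.eventuallyLE

/-- The closed-up unit square `(0, 1] × (0, 1]`, which is tiled by half-open grid squares. -/
def unitSquare : Set (ℝ × ℝ) := Ioc 0 1 ×ˢ Ioc 0 1

section WeightedPoincare

variable {α α₁ α₂ a b h : ℝ} {g φ : ℝ × ℝ → ℝ}

lemma square_subset_unitSquare (ha : 0 ≤ a) (ha1 : a + h ≤ 1) (hb : 0 ≤ b) (hb1 : b + h ≤ 1) :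
    square a b h ⊆ unitSquare :=
  prod_mono (Ioc_subset_Ioc ha ha1) (Ioc_subset_Ioc hb hb1)

lemma sides_subset_of_square_subset (hh : 0 < h) (hQ : square a b h ⊆ unitSquare) :
    Ioc a (a + h) ⊆ Ioc 0 1 ∧ Ioc b (b + h) ⊆ Ioc 0 1 :=
  (prod_subset_prod_iff.1 hQ).resolve_right (by
    simp only [Ioc_eq_empty_iff, lt_add_iff_pos_right, hh, not_true, or_self, not_false_eq_true])

lemma sq_integral_abs_le_rpow {c : ℝ × ℝ → ℝ} {d : ℝ} (hα : α < 1 / 2) (hh : 0 < h)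
    (hc : Measurable c) (hd : Ioc d (d + h) ⊆ Ioc 0 1)
    (hcd : ∀ p ∈ square a b h, c p ∈ Ioc d (d + h))
    (hmap : (volume.restrict (square a b h)).map c =
      ENNReal.ofReal h • volume.restrict (Ioc d (d + h)))
    (hg : MemLp (fun p => c p ^ α * g p) 2 (volume.restrict (square a b h))) :
    (∫ p in square a b h, |g p|) ^ 2 ≤
      h / (1 - 2 * α) * ∫ p in square a b h, (c p ^ α * g p) ^ 2 := by
  have hsm : Measurable fun t : ℝ => (t ^ α)⁻¹ ^ 2 :=
    ((measurable_id.pow_const α).inv).pow_const 2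
  have hint : Integrable (fun t : ℝ => (t ^ α)⁻¹ ^ 2) ((volume.restrict (square a b h)).map c) := by
    rw [hmap]
    exact ((integrableOn_inv_rpow_sq hα).1.mono_set hd).smul_measure ENNReal.ofReal_ne_top
  have hpos : ∀ᵐ p ∂volume.restrict (square a b h), c p ^ α ≠ 0 := by
    filter_upwards [ae_restrict_mem (measurableSet_square a b h)] with p hp
    exact (Real.rpow_pos_of_pos (hd (hcd p hp)).1 α).ne'
  have hmem : MemLp (fun p => (c p ^ α)⁻¹) 2 (volume.restrict (square a b h)) :=
    (memLp_two_iff_integrable_sq (hc.pow_const α).inv.aestronglyMeasurable).2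
      (hint.comp_measurable hc)
  have hweight : ∫ p in square a b h, (c p ^ α)⁻¹ ^ 2 ≤ h / (1 - 2 * α) := by
    rw [← integral_map hc.aemeasurable (f := fun t : ℝ => (t ^ α)⁻¹ ^ 2)
        hsm.aestronglyMeasurable, hmap, integral_smul_measure, ENNReal.toReal_ofReal hh.le,
      smul_eq_mul, div_eq_mul_one_div]
    exact mul_le_mul_of_nonneg_left (integral_inv_rpow_sq_le hα hd) hh.le
  exact (sq_integral_abs_le_of_weight hpos hmem hg).trans
    (mul_le_mul_of_nonneg_right hweight (integral_nonneg fun _ => sq_nonneg _))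

lemma map_fst_volume_restrict_square (a b h : ℝ) : (volume.restrict (square a b h)).map Prod.fst =
    ENNReal.ofReal h • volume.restrict (Ioc a (a + h)) := by
  rw [volume_restrict_square, Measure.map_fst_prod, Measure.restrict_apply_univ, Real.volume_Ioc,
    add_sub_cancel_left]

lemma map_snd_volume_restrict_square (a b h : ℝ) : (volume.restrict (square a b h)).map Prod.snd =
    ENNReal.ofReal h • volume.restrict (Ioc b (b + h)) := by
  rw [volume_restrict_square, Measure.map_snd_prod, Measure.restrict_apply_univ, Real.volume_Ioc,
    add_sub_cancel_left]

/-- The constant of the Poincaré inequality for the weighted gradient on squares in `(0, 1]²`. It is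
finite because `t ^ (-2α)` is integrable at `0`. -/
def poincareConst (α₁ α₂ : ℝ) : ℝ := 2 / (1 - 2 * α₁) + 2 / (1 - 2 * α₂)

lemma poincareConst_nonneg (hα₁ : α₁ < 1 / 2) (hα₂ : α₂ < 1 / 2) : 0 ≤ poincareConst α₁ α₂ :=
  add_nonneg (div_nonneg zero_le_two (by linarith)) (div_nonneg zero_le_two (by linarith))

lemma integral_square_sq_le_weighted (hα₁ : α₁ < 1 / 2) (hα₂ : α₂ < 1 / 2) (hh : 0 < h)
    (hQ : square a b h ⊆ unitSquare) (hφ : ContDiff ℝ 1 φ)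
    (hx : MemLp (fun p => p.2 ^ α₁ * pdx φ p) 2 (volume.restrict (square a b h)))
    (hy : MemLp (fun p => p.1 ^ α₂ * pdy φ p) 2 (volume.restrict (square a b h))) :
    ∫ p in square a b h, φ p ^ 2 ≤ h * poincareConst α₁ α₂ *
        ((∫ p in square a b h, (p.2 ^ α₁ * pdx φ p) ^ 2) +
          ∫ p in square a b h, (p.1 ^ α₂ * pdy φ p) ^ 2) +
      (∫ p in square a b h, φ p) ^ 2 / h ^ 2 := by
  refine (integral_square_sq_le hφ a b hh).trans (add_le_add_left ?_ _)
  obtain ⟨ha, hb⟩ := sides_subset_of_square_subset hh hQ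
  have hX := sq_integral_abs_le_rpow hα₁ hh measurable_snd hb (fun _ hp => hp.2)
    (map_snd_volume_restrict_square a b h) hx
  have hY := sq_integral_abs_le_rpow hα₂ hh measurable_fst ha (fun _ hp => hp.1)
    (map_fst_volume_restrict_square a b h) hy
  have hX0 : 0 ≤ ∫ p in square a b h, (p.2 ^ α₁ * pdx φ p) ^ 2 :=
    integral_nonneg fun _ => sq_nonneg _
  have hY0 : 0 ≤ ∫ p in square a b h, (p.1 ^ α₂ * pdy φ p) ^ 2 :=
    integral_nonneg fun _ => sq_nonneg _
  generalize (∫ p in square a b h, (p.2 ^ α₁ * pdx φ p) ^ 2) = X at *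
  generalize (∫ p in square a b h, (p.1 ^ α₂ * pdy φ p) ^ 2) = Y at *
  have h1 : 0 ≤ h / (1 - 2 * α₁) := div_nonneg hh.le (by linarith)
  have h2 : 0 ≤ h / (1 - 2 * α₂) := div_nonneg hh.le (by linarith)
  calc ((∫ p in square a b h, |pdx φ p|) + ∫ p in square a b h, |pdy φ p|) ^ 2
      ≤ 2 * (h / (1 - 2 * α₁) * X) + 2 * (h / (1 - 2 * α₂) * Y) := by
        linarith [add_sq_le (a := ∫ p in square a b h, |pdx φ p|)
          (b := ∫ p in square a b h, |pdy φ p|)]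
    _ ≤ h * poincareConst α₁ α₂ * (X + Y) := by
        have e : h * poincareConst α₁ α₂ = 2 * (h / (1 - 2 * α₁)) + 2 * (h / (1 - 2 * α₂)) := by
          rw [poincareConst]; ring
        rw [e]
        linarith [mul_nonneg h1 hY0, mul_nonneg h2 hX0]

end WeightedPoincare

/-! ### The energy space -/

local notation "μΩ" => (volume.restrict Omega : Measure (ℝ × ℝ))

lemma isOpen_Omega : IsOpen Omega := isOpen_Ioo.prod isOpen_Ioo

lemma measurableSet_Omega : MeasurableSet Omega := isOpen_Omega.measurableSet

lemma restrict_Omega_eq_restrict_unitSquare : μΩ = volume.restrict unitSquare := by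
  rw [Omega, unitSquare, Measure.volume_eq_prod, ← Measure.prod_restrict, ← Measure.prod_restrict,
    restrict_Ioo_eq_restrict_Ioc]

instance : IsFiniteMeasure μΩ := by
  rw [Omega, Measure.volume_eq_prod, ← Measure.prod_restrict]
  infer_instance

lemma restrict_Omega_restrict_of_subset {s : Set (ℝ × ℝ)} (hs : s ⊆ unitSquare) :
    (μΩ).restrict s = volume.restrict s := by
  rw [restrict_Omega_eq_restrict_unitSquare, Measure.restrict_restrict_of_subset hs]

section TestFunctions

variable {φ ψ : ℝ × ℝ → ℝ} {α α₁ α₂ : ℝ}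

lemma IsTest.contDiff_one (hφ : IsTest φ) : ContDiff ℝ 1 φ :=
  hφ.1.of_le (by exact_mod_cast le_top)

lemma IsTest.differentiableAt (hφ : IsTest φ) (p : ℝ × ℝ) : DifferentiableAt ℝ φ p :=
  hφ.contDiff_one.differentiable one_ne_zero p

lemma IsTest.of_tsupport_subset (hψ : IsTest ψ) (hφ : ContDiff ℝ (⊤ : ℕ∞) φ)
    (hsub : tsupport φ ⊆ tsupport ψ) : IsTest φ :=
  ⟨hφ, hψ.2.1.of_isClosed_subset (isClosed_tsupport φ) hsub, hsub.trans hψ.2.2⟩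

lemma isTest_zero : IsTest 0 :=
  ⟨contDiff_const, HasCompactSupport.zero, by simp [tsupport]⟩

lemma IsTest.add (hφ : IsTest φ) (hψ : IsTest ψ) : IsTest (φ + ψ) :=
  ⟨hφ.1.add hψ.1, hφ.2.1.add hψ.2.1, (tsupport_add φ ψ).trans (union_subset hφ.2.2 hψ.2.2)⟩

lemma IsTest.smul (hφ : IsTest φ) (c : ℝ) : IsTest (c • φ) :=
  hφ.of_tsupport_subset (hφ.1.const_smul c) (tsupport_smul_subset_right (fun _ => c) φ)

lemma continuous_rpow_mul {c g : ℝ × ℝ → ℝ} (hc : Continuous c) (hcpos : ∀ p ∈ Omega, 0 < c p)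
    (hg : Continuous g) (hsupp : tsupport g ⊆ Omega) : Continuous fun p => c p ^ α * g p := by
  refine continuous_of_tsupport fun p hp => ?_
  have hpΩ : p ∈ Omega := hsupp (tsupport_mul_subset_right hp)
  exact (hc.continuousAt.rpow_const (Or.inl (hcpos p hpΩ).ne')).mul hg.continuousAt

lemma IsTest.memLp (hφ : IsTest φ) : MemLp φ 2 μΩ :=
  (hφ.1.continuous.memLp_of_hasCompactSupport hφ.2.1).restrict _

lemma IsTest.memLp_pdx (hφ : IsTest φ) (α : ℝ) : MemLp (fun p => p.2 ^ α * pdx φ p) 2 μΩ :=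
  ((continuous_rpow_mul continuous_snd (fun _ hp => hp.2.1) (continuous_pdx hφ.contDiff_one)
    ((tsupport_fderiv_apply_subset ℝ _).trans hφ.2.2)).memLp_of_hasCompactSupport
      (hφ.2.1.fderiv_apply ℝ (1, 0)).mul_left).restrict _

lemma IsTest.memLp_pdy (hφ : IsTest φ) (α : ℝ) : MemLp (fun p => p.1 ^ α * pdy φ p) 2 μΩ :=
  ((continuous_rpow_mul continuous_fst (fun _ hp => hp.1.1) (continuous_pdy hφ.contDiff_one)
    ((tsupport_fderiv_apply_subset ℝ _).trans hφ.2.2)).memLp_of_hasCompactSupport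
      (hφ.2.1.fderiv_apply ℝ (0, 1)).mul_left).restrict _

end TestFunctions

/-- The Hilbert space `L²(Ω)`. -/
abbrev L2Omega : Type := Lp ℝ 2 μΩ

section WeightedGradient

variable {α₁ α₂ : ℝ} {u X Y : ℝ × ℝ → ℝ}

/-- The graph of the weighted gradient `φ ↦ (y^α₁ ∂ₓφ, x^α₂ ∂_yφ)` over the test functions. -/
def testGraph (α₁ α₂ : ℝ) : Submodule ℝ (L2Omega × L2Omega × L2Omega) where
  carrier := {w | ∃ φ, IsTest φ ∧ w.1 =ᵐ[μΩ] φ ∧ w.2.1 =ᵐ[μΩ] (fun p => p.2 ^ α₁ * pdx φ p) ∧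
    w.2.2 =ᵐ[μΩ] fun p => p.1 ^ α₂ * pdy φ p}
  zero_mem' := by
    refine ⟨0, isTest_zero, Lp.coeFn_zero _ _ _, ?_, ?_⟩ <;>
    · refine (Lp.coeFn_zero _ _ _).trans (ae_of_all _ fun p => ?_)
      simp [pdx, pdy]
  add_mem' := by
    rintro w v ⟨φ, hφ, h0, hx, hy⟩ ⟨ψ, hψ, h0', hx', hy'⟩
    refine ⟨φ + ψ, hφ.add hψ, (Lp.coeFn_add _ _).trans (h0.add h0'),
      (Lp.coeFn_add _ _).trans ((hx.add hx').trans (ae_of_all _ fun p => ?_)),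
      (Lp.coeFn_add _ _).trans ((hy.add hy').trans (ae_of_all _ fun p => ?_))⟩ <;>
    simp only [pdx, pdy, Pi.add_apply, fderiv_add (hφ.differentiableAt p) (hψ.differentiableAt p),
      add_apply, mul_add]
  smul_mem' := by
    rintro c w ⟨φ, hφ, h0, hx, hy⟩
    refine ⟨c • φ, hφ.smul c, (Lp.coeFn_smul _ _).trans (h0.const_smul c),
      (Lp.coeFn_smul _ _).trans ((hx.const_smul c).trans (ae_of_all _ fun p => ?_)),
      (Lp.coeFn_smul _ _).trans ((hy.const_smul c).trans (ae_of_all _ fun p => ?_))⟩ <;>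
    simp only [pdx, pdy, Pi.smul_apply, fderiv_const_smul (hφ.differentiableAt p), smul_apply,
      smul_eq_mul, mul_left_comm]

/-- The graph of the weighted gradient on `𝓗₀¹(Ω)`: pairs of a function and its weighted gradient,
closed in `L²`. -/
def sobolevGraph (α₁ α₂ : ℝ) : Submodule ℝ (L2Omega × L2Omega × L2Omega) :=
  (testGraph α₁ α₂).topologicalClosure

lemma isClosed_sobolevGraph : IsClosed (sobolevGraph α₁ α₂ : Set (L2Omega × L2Omega × L2Omega)) :=
  Submodule.isClosed_topologicalClosure _

/-- `u ∈ 𝓗₀¹(Ω)` with weighted gradient `(X, Y) = (y^α₁ ∂ₓu, x^α₂ ∂_yu)`, as functions defined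
almost everywhere. -/
def HasWeightedGrad (α₁ α₂ : ℝ) (u X Y : ℝ × ℝ → ℝ) : Prop :=
  ∃ w ∈ sobolevGraph α₁ α₂, w.1 =ᵐ[μΩ] u ∧ w.2.1 =ᵐ[μΩ] X ∧ w.2.2 =ᵐ[μΩ] Y

lemma HasWeightedGrad.memLp (h : HasWeightedGrad α₁ α₂ u X Y) :
    MemLp u 2 μΩ ∧ MemLp X 2 μΩ ∧ MemLp Y 2 μΩ := by
  obtain ⟨w, -, h0, hx, hy⟩ := h
  exact ⟨(memLp_congr_ae h0).1 (Lp.memLp _), (memLp_congr_ae hx).1 (Lp.memLp _),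
    (memLp_congr_ae hy).1 (Lp.memLp _)⟩

lemma HasWeightedGrad.mem_sobolevGraph (h : HasWeightedGrad α₁ α₂ u X Y) {U X' Y' : L2Omega}
    (hU : U =ᵐ[μΩ] u) (hX : X' =ᵐ[μΩ] X) (hY : Y' =ᵐ[μΩ] Y) : (U, X', Y') ∈ sobolevGraph α₁ α₂ := by
  obtain ⟨w, hw, h0, hx, hy⟩ := h
  rwa [Lp.ext (hU.trans h0.symm), Lp.ext (hX.trans hx.symm), Lp.ext (hY.trans hy.symm)]

lemma IsTest.hasWeightedGrad {φ : ℝ × ℝ → ℝ} (hφ : IsTest φ) (α₁ α₂ : ℝ) :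
    HasWeightedGrad α₁ α₂ φ (fun p => p.2 ^ α₁ * pdx φ p) (fun p => p.1 ^ α₂ * pdy φ p) := by
  have h0 := hφ.memLp.coeFn_toLp
  have hx := (hφ.memLp_pdx α₁).coeFn_toLp
  have hy := (hφ.memLp_pdy α₂).coeFn_toLp
  exact ⟨(_, _, _), Submodule.le_topologicalClosure _ ⟨φ, hφ, h0, hx, hy⟩, h0, hx, hy⟩

lemma hasWeightedGrad_of_tendsto {v vx vy : ℕ → ℝ × ℝ → ℝ} {V Vx Vy : ℕ → L2Omega} {U X Y : L2Omega}
    (h : ∀ n, HasWeightedGrad α₁ α₂ (v n) (vx n) (vy n)) (hV : ∀ n, V n =ᵐ[μΩ] v n)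
    (hVx : ∀ n, Vx n =ᵐ[μΩ] vx n) (hVy : ∀ n, Vy n =ᵐ[μΩ] vy n) (hU : Tendsto V atTop (𝓝 U))
    (hX : Tendsto Vx atTop (𝓝 X)) (hY : Tendsto Vy atTop (𝓝 Y)) :
    (U, X, Y) ∈ sobolevGraph α₁ α₂ :=
  isClosed_sobolevGraph.mem_of_tendsto (hU.prodMk_nhds (hX.prodMk_nhds hY))
    (Eventually.of_forall fun n => (h n).mem_sobolevGraph (hV n) (hVx n) (hVy n))

end WeightedGradient

section LpTwo

variable {Z : Type*} [MeasurableSpace Z] {μ : Measure Z}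

lemma exists_seq_tendsto_ae_of_tendsto_Lp {f : ℕ → Lp ℝ 2 μ} {g : Lp ℝ 2 μ}
    (h : Tendsto f atTop (𝓝 g)) :
    ∃ ns : ℕ → ℕ, StrictMono ns ∧ ∀ᵐ x ∂μ, Tendsto (fun i => f (ns i) x) atTop (𝓝 (g x)) :=
  (tendstoInMeasure_of_tendsto_Lp h).exists_seq_tendsto_ae

lemma memLp_two_mul_of_bounded {g : Z → ℝ} {C : ℝ} (hgm : AEStronglyMeasurable g μ)
    (hC : ∀ᵐ x ∂μ, |g x| ≤ C) (f : Lp ℝ 2 μ) : MemLp (fun x => g x * f x) 2 μ :=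
  (memLp_two_iff_integrable_sq (hgm.mul (Lp.aestronglyMeasurable f))).2
    (integrable_sq_mul_Lp hgm hC f)

lemma exists_tendsto_Lp_two_mul {g : ℕ → Z → ℝ} {g' : Z → ℝ} {C : ℝ}
    (hgm : ∀ n, AEStronglyMeasurable (g n) μ) (hC : ∀ n, ∀ᵐ x ∂μ, |g n x| ≤ C)
    (hg : ∀ᵐ x ∂μ, Tendsto (fun n => g n x) atTop (𝓝 (g' x)))
    {f : ℕ → Lp ℝ 2 μ} {f' : Lp ℝ 2 μ} (hf : Tendsto f atTop (𝓝 f')) :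
    ∃ (F : ℕ → Lp ℝ 2 μ) (F' : Lp ℝ 2 μ), (∀ n, F n =ᵐ[μ] fun x => g n x * f n x) ∧
      (F' =ᵐ[μ] fun x => g' x * f' x) ∧ Tendsto F atTop (𝓝 F') := by
  have hC' : ∀ᵐ x ∂μ, |g' x| ≤ C := by
    filter_upwards [hg, ae_all_iff.2 hC] with x hx hCx
    exact le_of_tendsto hx.abs (Eventually.of_forall hCx)
  have hF := fun n => memLp_two_mul_of_bounded (hgm n) (hC n) (f n)
  have hF' := memLp_two_mul_of_bounded (aestronglyMeasurable_of_tendsto_ae atTop hgm hg) hC' f'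
  exact ⟨fun n => (hF n).toLp _, hF'.toLp _, fun n => (hF n).coeFn_toLp, hF'.coeFn_toLp,
    tendsto_Lp_two_mul_of_tendsto_ae hgm hC hg hf (fun n => (hF n).coeFn_toLp) hF'.coeFn_toLp⟩

lemma exists_tendsto_Lp_two_mul_const {g : ℕ → Z → ℝ} {g' : Z → ℝ} {C : ℝ}
    (hgm : ∀ n, AEStronglyMeasurable (g n) μ) (hC : ∀ n, ∀ᵐ x ∂μ, |g n x| ≤ C)
    (hg : ∀ᵐ x ∂μ, Tendsto (fun n => g n x) atTop (𝓝 (g' x))) {e : Z → ℝ} (he : MemLp e 2 μ) :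
    ∃ (F : ℕ → Lp ℝ 2 μ) (F' : Lp ℝ 2 μ), (∀ n, F n =ᵐ[μ] fun x => g n x * e x) ∧
      (F' =ᵐ[μ] fun x => g' x * e x) ∧ Tendsto F atTop (𝓝 F') := by
  obtain ⟨F, F', hF, hF', hlim⟩ :=
    exists_tendsto_Lp_two_mul hgm hC hg (tendsto_const_nhds (x := he.toLp e))
  refine ⟨F, F', fun n => ?_, ?_, hlim⟩
  · filter_upwards [hF n, he.coeFn_toLp] with x h h'
    rw [h, h']
  · filter_upwards [hF', he.coeFn_toLp] with x h h'
    rw [h, h']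

lemma exists_tendsto_Lp_two_mul_add {g k : ℕ → Z → ℝ} {g' k' : Z → ℝ} {C D : ℝ}
    (hgm : ∀ n, AEStronglyMeasurable (g n) μ) (hC : ∀ n, ∀ᵐ x ∂μ, |g n x| ≤ C)
    (hg : ∀ᵐ x ∂μ, Tendsto (fun n => g n x) atTop (𝓝 (g' x)))
    (hkm : ∀ n, AEStronglyMeasurable (k n) μ) (hD : ∀ n, ∀ᵐ x ∂μ, |k n x| ≤ D)
    (hk : ∀ᵐ x ∂μ, Tendsto (fun n => k n x) atTop (𝓝 (k' x)))
    {f : ℕ → Lp ℝ 2 μ} {f' : Lp ℝ 2 μ} (hf : Tendsto f atTop (𝓝 f')) {e : Z → ℝ}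
    (he : MemLp e 2 μ) :
    ∃ (F : ℕ → Lp ℝ 2 μ) (F' : Lp ℝ 2 μ), (∀ n, F n =ᵐ[μ] fun x => g n x * f n x + k n x * e x) ∧
      (F' =ᵐ[μ] fun x => g' x * f' x + k' x * e x) ∧ Tendsto F atTop (𝓝 F') := by
  obtain ⟨F, F', hF, hF', hlim⟩ := exists_tendsto_Lp_two_mul hgm hC hg hf
  obtain ⟨G, G', hG, hG', hlim'⟩ := exists_tendsto_Lp_two_mul_const hkm hD hk he
  exact ⟨F + G, F' + G', fun n => (Lp.coeFn_add _ _).trans ((hF n).add (hG n)),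
    (Lp.coeFn_add _ _).trans (hF'.add hG'), hlim.add hlim'⟩

end LpTwo

section Calculus

variable {α₁ α₂ B : ℝ} {L : ℝ≥0} {F : ℝ → ℝ} {φ ψ : ℝ × ℝ → ℝ} {w : L2Omega × L2Omega × L2Omega}

lemma IsTest.comp (hφ : IsTest φ) (hF : ContDiff ℝ (⊤ : ℕ∞) F) (hF0 : F 0 = 0) :
    IsTest fun p => F (φ p) :=
  hφ.of_tsupport_subset (hF.comp hφ.1) (tsupport_comp_subset hF0 φ)

lemma IsTest.mul_comp (hψ : IsTest ψ) (hφ : IsTest φ) (hF : ContDiff ℝ (⊤ : ℕ∞) F) :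
    IsTest fun p => ψ p * F (φ p) :=
  hψ.of_tsupport_subset (hψ.1.mul (hF.comp hφ.1)) tsupport_mul_subset_left

lemma IsTest.exists_bound (hφ : IsTest φ) : ∃ C, ∀ p, |φ p| ≤ C :=
  hφ.2.1.exists_bound_of_continuous hφ.1.continuous

lemma IsTest.hasFDerivAt_comp (hφ : IsTest φ) (hF : ContDiff ℝ (⊤ : ℕ∞) F) (p : ℝ × ℝ) :
    HasFDerivAt (fun p => F (φ p)) (deriv F (φ p) • fderiv ℝ φ p) p :=
  ((hF.differentiable (by simp)) (φ p)).hasDerivAt.comp_hasFDerivAt p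
    (hφ.differentiableAt p).hasFDerivAt

lemma IsTest.hasWeightedGrad_comp (hφ : IsTest φ) (hF : ContDiff ℝ (⊤ : ℕ∞) F) (hF0 : F 0 = 0) :
    HasWeightedGrad α₁ α₂ (fun p => F (φ p)) (fun p => deriv F (φ p) * (p.2 ^ α₁ * pdx φ p))
      fun p => deriv F (φ p) * (p.1 ^ α₂ * pdy φ p) := by
  convert! (hφ.comp hF hF0).hasWeightedGrad α₁ α₂ using 2 with p p <;>
  · simp only [pdx, pdy, (hφ.hasFDerivAt_comp hF p).fderiv, smul_apply, smul_eq_mul]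
    ring

lemma IsTest.hasWeightedGrad_mul_comp (hψ : IsTest ψ) (hφ : IsTest φ)
    (hF : ContDiff ℝ (⊤ : ℕ∞) F) :
    HasWeightedGrad α₁ α₂ (fun p => F (φ p) * ψ p)
      (fun p => ψ p * deriv F (φ p) * (p.2 ^ α₁ * pdx φ p) + F (φ p) * (p.2 ^ α₁ * pdx ψ p))
      fun p => ψ p * deriv F (φ p) * (p.1 ^ α₂ * pdy φ p) + F (φ p) * (p.1 ^ α₂ * pdy ψ p) := by
  convert! (hψ.mul_comp hφ hF).hasWeightedGrad α₁ α₂ using 2 with p p p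
  · exact mul_comm _ _
  all_goals
    simp only [pdx, pdy,
      ((hψ.differentiableAt p).hasFDerivAt.fun_mul (hφ.hasFDerivAt_comp hF p)).fderiv,
      add_apply, smul_apply, smul_eq_mul]
    ring

lemma exists_test_seq (hw : w ∈ sobolevGraph α₁ α₂) :
    ∃ (φ : ℕ → ℝ × ℝ → ℝ) (U X Y : ℕ → L2Omega),
      (∀ n, IsTest (φ n) ∧ U n =ᵐ[μΩ] φ n ∧ X n =ᵐ[μΩ] (fun p => p.2 ^ α₁ * pdx (φ n) p) ∧
        Y n =ᵐ[μΩ] fun p => p.1 ^ α₂ * pdy (φ n) p) ∧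
      Tendsto U atTop (𝓝 w.1) ∧ Tendsto X atTop (𝓝 w.2.1) ∧ Tendsto Y atTop (𝓝 w.2.2) ∧
      ∀ᵐ p ∂μΩ, Tendsto (fun n => φ n p) atTop (𝓝 (w.1 p)) := by
  obtain ⟨v, hv, hlim⟩ := mem_closure_iff_seq_limit.1 hw
  obtain ⟨ns, hns, hae⟩ := exists_seq_tendsto_ae_of_tendsto_Lp hlim.fst_nhds
  choose φ hφ using fun n => hv (ns n)
  have hlim' := hlim.comp hns.tendsto_atTop
  refine ⟨φ, _, _, _, hφ, hlim'.fst_nhds, hlim'.snd_nhds.fst_nhds, hlim'.snd_nhds.snd_nhds, ?_⟩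
  filter_upwards [hae, ae_all_iff.2 fun n => (hφ n).2.1] with p hp hp'
  exact hp.congr hp'

lemma hasWeightedGrad_comp (hw : w ∈ sobolevGraph α₁ α₂) (hF : ContDiff ℝ (⊤ : ℕ∞) F)
    (hF0 : F 0 = 0) (hLip : LipschitzWith L F) :
    HasWeightedGrad α₁ α₂ (fun p => F (w.1 p)) (fun p => deriv F (w.1 p) * w.2.1 p)
      fun p => deriv F (w.1 p) * w.2.2 p := by
  obtain ⟨φ, U, X, Y, hφ, hU, hX, hY, hae⟩ := exists_test_seq hw
  have hF' : Continuous (deriv F) := hF.continuous_deriv (by simp)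
  have hm : ∀ n, AEStronglyMeasurable (fun p => deriv F (φ n p)) μΩ := fun n =>
    (hF'.comp (hφ n).1.1.continuous).aestronglyMeasurable
  have hb : ∀ n, ∀ᵐ p ∂μΩ, |deriv F (φ n p)| ≤ L := fun n =>
    ae_of_all _ fun p => norm_deriv_le_of_lipschitz hLip
  have hd : ∀ᵐ p ∂μΩ, Tendsto (fun n => deriv F (φ n p)) atTop (𝓝 (deriv F (w.1 p))) :=
    hae.mono fun p hp => (hF'.tendsto _).comp hp
  obtain ⟨Vx, Vx', hVx, hVx', hlimx⟩ := exists_tendsto_Lp_two_mul hm hb hd hX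
  obtain ⟨Vy, Vy', hVy, hVy', hlimy⟩ := exists_tendsto_Lp_two_mul hm hb hd hY
  refine ⟨_, hasWeightedGrad_of_tendsto (fun n => (hφ n).1.hasWeightedGrad_comp hF hF0)
    (fun n => ?_) (fun n => ?_) (fun n => ?_)
    (((hLip.continuous_compLp hF0).tendsto _).comp hU) hlimx hlimy, ?_, hVx', hVy'⟩
  · filter_upwards [hLip.coeFn_compLp hF0 (U n), (hφ n).2.1] with p hp hp'
    simp only [Function.comp_apply, hp, hp']
  · filter_upwards [hVx n, (hφ n).2.2.1] with p hp hp'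
    rw [hp, hp']
  · filter_upwards [hVy n, (hφ n).2.2.2] with p hp hp'
    rw [hp, hp']
  · exact hLip.coeFn_compLp hF0 w.1

lemma hasWeightedGrad_mul_comp (hψ : IsTest ψ) (hw : w ∈ sobolevGraph α₁ α₂)
    (hF : ContDiff ℝ (⊤ : ℕ∞) F) (hLip : LipschitzWith L F) (hB : ∀ s, |F s| ≤ B) :
    HasWeightedGrad α₁ α₂ (fun p => F (w.1 p) * ψ p)
      (fun p => ψ p * deriv F (w.1 p) * w.2.1 p + F (w.1 p) * (p.2 ^ α₁ * pdx ψ p))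
      fun p => ψ p * deriv F (w.1 p) * w.2.2 p + F (w.1 p) * (p.1 ^ α₂ * pdy ψ p) := by
  obtain ⟨φ, U, X, Y, hφ, -, hX, hY, hae⟩ := exists_test_seq hw
  obtain ⟨C, hC⟩ := hψ.exists_bound
  have hF' : Continuous (deriv F) := hF.continuous_deriv (by simp)
  have hm : ∀ n, AEStronglyMeasurable (fun p => F (φ n p)) μΩ := fun n =>
    (hF.continuous.comp (hφ n).1.1.continuous).aestronglyMeasurable
  have hb : ∀ n, ∀ᵐ p ∂μΩ, |F (φ n p)| ≤ B := fun n => ae_of_all _ fun p => hB _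
  have hd : ∀ᵐ p ∂μΩ, Tendsto (fun n => F (φ n p)) atTop (𝓝 (F (w.1 p))) :=
    hae.mono fun p hp => (hF.continuous.tendsto _).comp hp
  have hm' : ∀ n, AEStronglyMeasurable (fun p => ψ p * deriv F (φ n p)) μΩ := fun n =>
    (hψ.1.continuous.mul (hF'.comp (hφ n).1.1.continuous)).aestronglyMeasurable
  have hb' : ∀ n, ∀ᵐ p ∂μΩ, |ψ p * deriv F (φ n p)| ≤ C * L := fun n => ae_of_all _ fun p => by
    rw [abs_mul]
    exact mul_le_mul (hC p) (norm_deriv_le_of_lipschitz hLip) (abs_nonneg _)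
      ((abs_nonneg _).trans (hC p))
  have hd' : ∀ᵐ p ∂μΩ, Tendsto (fun n => ψ p * deriv F (φ n p)) atTop
      (𝓝 (ψ p * deriv F (w.1 p))) :=
    hae.mono fun p hp => ((hF'.tendsto _).comp hp).const_mul _
  obtain ⟨V, V', hV, hV', hlim⟩ := exists_tendsto_Lp_two_mul_const hm hb hd hψ.memLp
  obtain ⟨Vx, Vx', hVx, hVx', hlimx⟩ :=
    exists_tendsto_Lp_two_mul_add hm' hb' hd' hm hb hd hX (hψ.memLp_pdx α₁)
  obtain ⟨Vy, Vy', hVy, hVy', hlimy⟩ :=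
    exists_tendsto_Lp_two_mul_add hm' hb' hd' hm hb hd hY (hψ.memLp_pdy α₂)
  refine ⟨_, hasWeightedGrad_of_tendsto (fun n => hψ.hasWeightedGrad_mul_comp (hφ n).1 hF) hV
    (fun n => ?_) (fun n => ?_) hlim hlimx hlimy, hV', hVx', hVy'⟩
  · filter_upwards [hVx n, (hφ n).2.2.1] with p hp hp'
    rw [hp, hp']
  · filter_upwards [hVy n, (hφ n).2.2.2] with p hp hp'
    rw [hp, hp']

/-- The smooth approximation `√(s² + e²) - e` of `|s|`. -/
def smoothAbs (e s : ℝ) : ℝ := √(s ^ 2 + e ^ 2) - e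

section SmoothAbs

variable {e : ℝ}

lemma hasDerivAt_smoothAbs (he : 0 < e) (s : ℝ) :
    HasDerivAt (smoothAbs e) (s / √(s ^ 2 + e ^ 2)) s := by
  have hpos : s ^ 2 + e ^ 2 ≠ 0 := by positivity
  convert! (((hasDerivAt_id s).pow 2).add_const (e ^ 2)).sqrt hpos |>.sub_const e using 1
  simp only [Pi.pow_apply, id, Nat.cast_ofNat, pow_one, mul_one, Nat.add_one_sub_one]
  rw [mul_div_mul_left _ _ two_ne_zero]

lemma contDiff_smoothAbs (he : 0 < e) : ContDiff ℝ (⊤ : ℕ∞) (smoothAbs e) :=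
  (((contDiff_id.pow 2).add contDiff_const).sqrt fun s => by positivity).sub contDiff_const

lemma lipschitzWith_smoothAbs (he : 0 < e) : LipschitzWith 1 (smoothAbs e) := by
  refine lipschitzWith_of_nnnorm_deriv_le ((contDiff_smoothAbs he).differentiable (by simp))
    fun s => ?_
  rw [(hasDerivAt_smoothAbs he s).deriv, ← NNReal.coe_le_coe, coe_nnnorm, NNReal.coe_one,
    Real.norm_eq_abs, abs_div, abs_of_nonneg (Real.sqrt_nonneg _)]
  exact div_le_one_of_le₀ (Real.abs_le_sqrt (by linarith [sq_nonneg e])) (Real.sqrt_nonneg _)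

lemma smoothAbs_zero (he : 0 < e) : smoothAbs e 0 = 0 := by
  simp [smoothAbs, Real.sqrt_sq he.le]

lemma abs_smoothAbs_div_le (he : 0 < e) (s : ℝ) : |smoothAbs e s / s| ≤ 1 := by
  have h := (lipschitzWith_smoothAbs he).dist_le_mul s 0
  rw [smoothAbs_zero he, dist_zero_right, dist_zero_right, NNReal.coe_one, one_mul] at h
  rw [abs_div]
  exact div_le_one_of_le₀ h (abs_nonneg _)

lemma tendsto_smoothAbs (s : ℝ) :
    Tendsto (fun n : ℕ => smoothAbs (1 / (n + 1)) s) atTop (𝓝 |s|) := by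
  have h : Continuous fun e : ℝ => smoothAbs e s := by
    unfold smoothAbs
    fun_prop
  simpa [smoothAbs, Real.sqrt_sq_eq_abs, Function.comp_def] using
    (h.tendsto 0).comp (tendsto_one_div_add_atTop_nhds_zero_nat (𝕜 := ℝ))

lemma tendsto_deriv_smoothAbs (s : ℝ) :
    Tendsto (fun n : ℕ => deriv (smoothAbs (1 / (n + 1))) s) atTop (𝓝 (s / |s|)) := by
  simp only [(hasDerivAt_smoothAbs Nat.one_div_pos_of_nat s).deriv]
  rcases eq_or_ne s 0 with rfl | hs
  · simp
  have h : ContinuousAt (fun e : ℝ => s / √(s ^ 2 + e ^ 2)) 0 :=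
    continuousAt_const.div (by fun_prop) (by positivity)
  simpa [Real.sqrt_sq_eq_abs, Function.comp_def] using
    h.tendsto.comp (tendsto_one_div_add_atTop_nhds_zero_nat (𝕜 := ℝ))

end SmoothAbs

lemma hasWeightedGrad_abs (hw : w ∈ sobolevGraph α₁ α₂) :
    HasWeightedGrad α₁ α₂ (fun p => |w.1 p|) (fun p => w.1 p / |w.1 p| * w.2.1 p)
      fun p => w.1 p / |w.1 p| * w.2.2 p := by
  have he : ∀ n : ℕ, (0 : ℝ) < 1 / (n + 1) := fun n => Nat.one_div_pos_of_nat
  have hw1 : AEStronglyMeasurable w.1 μΩ := Lp.aestronglyMeasurable _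
  have hmquot : ∀ n : ℕ, AEStronglyMeasurable
      (fun p => smoothAbs (1 / (n + 1)) (w.1 p) / w.1 p) μΩ := fun n =>
    (((contDiff_smoothAbs (he n)).continuous.comp_aestronglyMeasurable hw1).aemeasurable.div
      hw1.aemeasurable).aestronglyMeasurable
  have hquot : ∀ n : ℕ, ∀ᵐ p ∂μΩ, |smoothAbs (1 / (n + 1)) (w.1 p) / w.1 p| ≤ 1 := fun n =>
    ae_of_all _ fun p => abs_smoothAbs_div_le (he n) _
  obtain ⟨V, V', hV, hV', hlim⟩ := exists_tendsto_Lp_two_mul_const hmquot hquot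
    (ae_of_all _ fun p => (tendsto_smoothAbs (w.1 p)).div_const _) (Lp.memLp w.1)
  have hm : ∀ n : ℕ, AEStronglyMeasurable (fun p => deriv (smoothAbs (1 / (n + 1))) (w.1 p)) μΩ :=
    fun n => ((contDiff_smoothAbs (he n)).continuous_deriv (by simp)).comp_aestronglyMeasurable hw1
  have hb : ∀ n : ℕ, ∀ᵐ p ∂μΩ, |deriv (smoothAbs (1 / (n + 1))) (w.1 p)| ≤ (1 : ℝ≥0) := fun n =>
    ae_of_all _ fun p => norm_deriv_le_of_lipschitz (lipschitzWith_smoothAbs (he n))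
  have hd := ae_of_all μΩ fun p => tendsto_deriv_smoothAbs (w.1 p)
  obtain ⟨X, X', hX, hX', hlimx⟩ := exists_tendsto_Lp_two_mul_const hm hb hd (Lp.memLp w.2.1)
  obtain ⟨Y, Y', hY, hY', hlimy⟩ := exists_tendsto_Lp_two_mul_const hm hb hd (Lp.memLp w.2.2)
  refine ⟨_, hasWeightedGrad_of_tendsto (fun n => hasWeightedGrad_comp hw
    (contDiff_smoothAbs (he n)) (smoothAbs_zero (he n)) (lipschitzWith_smoothAbs (he n)))
    (fun n => (hV n).trans (ae_of_all _ fun p => ?_)) hX hY hlim hlimx hlimy,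
    hV'.trans (ae_of_all _ fun p => ?_), hX', hY'⟩
  · exact div_mul_cancel_of_imp fun h => by rw [h, smoothAbs_zero (he n)]
  · exact div_mul_cancel_of_imp fun h => by rw [h, abs_zero]

end Calculus

section Poincare

lemma continuous_setIntegral_sq {Z : Type*} [MeasurableSpace Z] {μ : Measure Z} (s : Set Z) :
    Continuous fun f : Lp ℝ 2 μ => ∫ x in s, f x ^ 2 ∂μ := by
  refine ((LpToLpRestrictCLM Z ℝ ℝ μ 2 s).continuous.norm.pow 2).congr fun f => ?_
  rw [Pi.pow_apply, Lp_two_norm_sq]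
  exact integral_congr_ae ((LpToLpRestrictCLM_coeFn ℝ s f).mono fun x hx => by simp only [hx])

lemma continuous_setIntegral_Lp_two {Z : Type*} [MeasurableSpace Z] {μ : Measure Z}
    [IsFiniteMeasure μ] {s : Set Z} (hs : MeasurableSet s) :
    Continuous fun f : Lp ℝ 2 μ => ∫ x in s, f x ∂μ :=
  (continuous_const.inner continuous_id).congr fun f =>
    L2.inner_indicatorConstLp_one hs (measure_ne_top μ s) f

variable {α₁ α₂ a b h : ℝ} {w : L2Omega × L2Omega × L2Omega}

lemma setIntegral_square_sq_le (hα₁ : α₁ < 1 / 2) (hα₂ : α₂ < 1 / 2) (hh : 0 < h)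
    (hQ : square a b h ⊆ unitSquare) (hw : w ∈ sobolevGraph α₁ α₂) :
    ∫ p in square a b h, w.1 p ^ 2 ∂μΩ ≤
      h * poincareConst α₁ α₂ * ((∫ p in square a b h, w.2.1 p ^ 2 ∂μΩ) +
        ∫ p in square a b h, w.2.2 p ^ 2 ∂μΩ) + (∫ p in square a b h, w.1 p ∂μΩ) ^ 2 / h ^ 2 := by
  have hcont := continuous_setIntegral_sq (μ := μΩ) (square a b h)
  have hclosed : IsClosed {w : L2Omega × L2Omega × L2Omega |
      ∫ p in square a b h, w.1 p ^ 2 ∂μΩ ≤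
        h * poincareConst α₁ α₂ * ((∫ p in square a b h, w.2.1 p ^ 2 ∂μΩ) +
        ∫ p in square a b h, w.2.2 p ^ 2 ∂μΩ) + (∫ p in square a b h, w.1 p ∂μΩ) ^ 2 / h ^ 2} :=
    isClosed_le (hcont.comp continuous_fst) <|
      (continuous_const.mul ((hcont.comp (continuous_fst.comp continuous_snd)).add
        (hcont.comp (continuous_snd.comp continuous_snd)))).add
      ((((continuous_setIntegral_Lp_two (measurableSet_square a b h)).comp
        continuous_fst).pow 2).div_const _)
  refine closure_minimal ?_ hclosed hw
  rintro v ⟨φ, hφ, h0, hx, hy⟩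
  have hsq : ∀ {f : L2Omega} {g : ℝ × ℝ → ℝ}, f =ᵐ[μΩ] g →
      ∫ p in square a b h, f p ^ 2 ∂μΩ = ∫ p in square a b h, g p ^ 2 := fun hfg => by
    rw [← restrict_Omega_restrict_of_subset hQ]
    exact integral_congr_ae ((ae_restrict_of_ae hfg).mono fun p hp => by simp only [hp])
  have hint : ∫ p in square a b h, v.1 p ∂μΩ = ∫ p in square a b h, φ p := by
    rw [← restrict_Omega_restrict_of_subset hQ]
    exact integral_congr_ae (ae_restrict_of_ae h0)
  rw [mem_ofPred_eq, hsq h0, hsq hx, hsq hy, hint]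
  have hrestrict := restrict_Omega_restrict_of_subset hQ
  exact integral_square_sq_le_weighted hα₁ hα₂ hh hQ hφ.contDiff_one
    (hrestrict ▸ (hφ.memLp_pdx α₁).restrict _) (hrestrict ▸ (hφ.memLp_pdy α₂).restrict _)

end Poincare

section Grid

variable {N : ℕ} {f : ℝ × ℝ → ℝ}

lemma mem_Ioc_div_add_one_div_iff (hN : 0 < N) {x : ℝ} {i : ℕ} :
    x ∈ Ioc ((i : ℝ) / N) (i / N + 1 / N) ↔ ⌈x * N⌉₊ = i + 1 := by
  have hN' : (0 : ℝ) < N := Nat.cast_pos.2 hN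
  rw [Nat.ceil_eq_iff i.succ_ne_zero, mem_Ioc, ← add_div, div_lt_iff₀ hN', le_div_iff₀ hN']
  push_cast
  rfl

lemma mem_square_grid_iff (hN : 0 < N) {p : ℝ × ℝ} {i j : ℕ} :
    p ∈ square (i / N) (j / N) (1 / N) ↔ ⌈p.1 * N⌉₊ = i + 1 ∧ ⌈p.2 * N⌉₊ = j + 1 := by
  rw [← mem_Ioc_div_add_one_div_iff hN, ← mem_Ioc_div_add_one_div_iff hN]
  rfl

lemma grid_subset_unitSquare (ij : Fin N × Fin N) :
    square (ij.1 / N) (ij.2 / N) (1 / N) ⊆ unitSquare := by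
  have hN : (0 : ℝ) < N := Nat.cast_pos.2 ij.1.pos
  have hle : ∀ i : Fin N, (i : ℝ) / N + 1 / N ≤ 1 := fun i => by
    rw [← add_div, div_le_one hN]
    exact_mod_cast i.2
  exact square_subset_unitSquare (by positivity) (hle _) (by positivity) (hle _)

lemma unitSquare_subset_iUnion_grid (hN : 0 < N) :
    unitSquare ⊆ ⋃ ij : Fin N × Fin N, square (ij.1 / N) (ij.2 / N) (1 / N) := by
  have hceil : ∀ {t : ℝ}, t ∈ Ioc (0 : ℝ) 1 → ∃ i : Fin N, ⌈t * N⌉₊ = i + 1 := fun {t} ht => by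
    have hpos : 0 < ⌈t * N⌉₊ := Nat.ceil_pos.2 (mul_pos ht.1 (Nat.cast_pos.2 hN))
    have hle : ⌈t * N⌉₊ ≤ N := Nat.ceil_le.2 (mul_le_of_le_one_left N.cast_nonneg ht.2)
    exact ⟨⟨⌈t * N⌉₊ - 1, by lia⟩, by simp only; lia⟩
  intro p hp
  obtain ⟨i, hi⟩ := hceil hp.1
  obtain ⟨j, hj⟩ := hceil hp.2
  exact mem_iUnion.2 ⟨(i, j), (mem_square_grid_iff hN).2 ⟨hi, hj⟩⟩

lemma integral_eq_sum_grid (hN : 0 < N) (hf : Integrable f μΩ) :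
    ∫ p, f p ∂μΩ = ∑ ij : Fin N × Fin N, ∫ p in square (ij.1 / N) (ij.2 / N) (1 / N), f p ∂μΩ := by
  have hunion : ⋃ ij : Fin N × Fin N, square (ij.1 / N) (ij.2 / N) (1 / N) = unitSquare :=
    (iUnion_subset grid_subset_unitSquare).antisymm (unitSquare_subset_iUnion_grid hN)
  rw [← integral_iUnion_fintype (fun _ => measurableSet_square _ _ _) ?_
    fun _ => hf.integrableOn, hunion, restrict_Omega_restrict_of_subset subset_rfl,
    restrict_Omega_eq_restrict_unitSquare]
  intro ij kl hne
  refine disjoint_left.2 fun p hp hp' => hne ?_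
  rw [mem_square_grid_iff hN] at hp hp'
  exact Prod.ext (Fin.ext (Nat.succ_injective (hp.1.symm.trans hp'.1)))
    (Fin.ext (Nat.succ_injective (hp.2.symm.trans hp'.2)))

end Grid

section EnergySpace

variable {α₁ α₂ : ℝ} {S : ℝ × ℝ → ℝ}

lemma isClosed_setOf_ae_eq_mul {Z : Type*} [MeasurableSpace Z] {μ : Measure Z} (S : Z → ℝ) :
    IsClosed {fg : Lp ℝ 2 μ × Lp ℝ 2 μ | fg.2 =ᵐ[μ] fun x => S x * fg.1 x} := by
  refine IsSeqClosed.isClosed fun fg fg' hfg hlim => ?_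
  obtain ⟨ns, hns, hf⟩ := exists_seq_tendsto_ae_of_tendsto_Lp hlim.fst_nhds
  obtain ⟨ms, hms, hg⟩ := exists_seq_tendsto_ae_of_tendsto_Lp
    (hlim.snd_nhds.comp hns.tendsto_atTop)
  filter_upwards [hf, hg, ae_all_iff.2 hfg] with x hfx hgx hx
  refine tendsto_nhds_unique hgx ?_
  simpa only [Function.comp_apply, hx] using (hfx.comp hms.tendsto_atTop).const_mul (S x)

/-- Pairs `(u, (y^α₁ ∂ₓu, x^α₂ ∂_yu, S u))` with `u ∈ 𝓗₀¹(Ω)` and `S u ∈ L²(Ω)`. For `S = √V` this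
is the space `H₀(Ω)`, and the inner product of second components is the form `a`. -/
def energySpace (α₁ α₂ : ℝ) (S : ℝ × ℝ → ℝ) :
    Submodule ℝ (L2Omega × PiLp 2 fun _ : Fin 3 => L2Omega) where
  carrier := {w | (w.1, w.2 0, w.2 1) ∈ sobolevGraph α₁ α₂ ∧ w.2 2 =ᵐ[μΩ] fun p => S p * w.1 p}
  zero_mem' := by
    refine ⟨(sobolevGraph α₁ α₂).zero_mem, ?_⟩
    filter_upwards [Lp.coeFn_zero ℝ 2 μΩ] with p hp
    simp only [Prod.snd_zero, Prod.fst_zero, PiLp.zero_apply, hp, Pi.zero_apply, mul_zero]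
  add_mem' := by
    rintro w v ⟨hw, hw'⟩ ⟨hv, hv'⟩
    refine ⟨(sobolevGraph α₁ α₂).add_mem hw hv, ?_⟩
    filter_upwards [hw', hv', Lp.coeFn_add w.1 v.1, Lp.coeFn_add (w.2 2) (v.2 2)] with p h h' h1 h2
    simp only [Prod.snd_add, Prod.fst_add, PiLp.add_apply, h1, h2, Pi.add_apply, h, h', mul_add]
  smul_mem' := by
    rintro c w ⟨hw, hw'⟩
    refine ⟨(sobolevGraph α₁ α₂).smul_mem c hw, ?_⟩
    filter_upwards [hw', Lp.coeFn_smul c w.1, Lp.coeFn_smul c (w.2 2)] with p h h1 h2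
    simp only [Prod.smul_snd, Prod.smul_fst, PiLp.smul_apply, h1, h2, Pi.smul_apply, h, smul_eq_mul,
      mul_left_comm]

lemma isClosed_energySpace :
    IsClosed (energySpace α₁ α₂ S : Set (L2Omega × PiLp 2 fun _ : Fin 3 => L2Omega)) := by
  have hproj : ∀ i, Continuous fun w : L2Omega × PiLp 2 fun _ : Fin 3 => L2Omega => w.2 i :=
    fun i => (PiLp.continuous_apply 2 _ i).comp continuous_snd
  exact (isClosed_sobolevGraph.preimage
    (continuous_fst.prodMk ((hproj 0).prodMk (hproj 1)))).inter
    ((isClosed_setOf_ae_eq_mul S).preimage (continuous_fst.prodMk (hproj 2)))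

lemma norm_sq_le_of_mem_energySpace (hα₁ : α₁ < 1 / 2) (hα₂ : α₂ < 1 / 2) {N : ℕ} (hN : 0 < N)
    {w : L2Omega × PiLp 2 fun _ : Fin 3 => L2Omega} (hw : w ∈ energySpace α₁ α₂ S) :
    ‖w.1‖ ^ 2 ≤ 1 / N * poincareConst α₁ α₂ * ‖w.2‖ ^ 2 +
      ∑ ij : Fin N × Fin N,
        (N * ∫ p in square (ij.1 / N) (ij.2 / N) (1 / N), w.1 p ∂μΩ) ^ 2 := by
  have hgrid := fun f : L2Omega => integral_eq_sum_grid hN (Lp.memLp f).integrable_sq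
  have hN' : (0 : ℝ) < 1 / N := one_div_pos.2 (Nat.cast_pos.2 hN)
  have hκ : 0 ≤ 1 / N * poincareConst α₁ α₂ := mul_nonneg hN'.le (poincareConst_nonneg hα₁ hα₂)
  calc ‖w.1‖ ^ 2
      = ∑ ij : Fin N × Fin N, ∫ p in square (ij.1 / N) (ij.2 / N) (1 / N), w.1 p ^ 2 ∂μΩ := by
        rw [Lp_two_norm_sq, hgrid]
    _ ≤ ∑ ij : Fin N × Fin N, (1 / N * poincareConst α₁ α₂ *
          ((∫ p in square (ij.1 / N) (ij.2 / N) (1 / N), w.2 0 p ^ 2 ∂μΩ) +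
            ∫ p in square (ij.1 / N) (ij.2 / N) (1 / N), w.2 1 p ^ 2 ∂μΩ) +
          (∫ p in square (ij.1 / N) (ij.2 / N) (1 / N), w.1 p ∂μΩ) ^ 2 / (1 / N) ^ 2) :=
        Finset.sum_le_sum fun ij _ =>
          setIntegral_square_sq_le hα₁ hα₂ hN' (grid_subset_unitSquare ij) hw.1
    _ = 1 / N * poincareConst α₁ α₂ * (‖w.2 0‖ ^ 2 + ‖w.2 1‖ ^ 2) + ∑ ij : Fin N × Fin N,
          (N * ∫ p in square (ij.1 / N) (ij.2 / N) (1 / N), w.1 p ∂μΩ) ^ 2 := by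
        rw [Finset.sum_add_distrib, ← Finset.mul_sum, Finset.sum_add_distrib, ← hgrid, ← hgrid,
          ← Lp_two_norm_sq, ← Lp_two_norm_sq]
        congr 1
        refine Finset.sum_congr rfl fun ij _ => ?_
        rw [mul_pow, one_div, inv_pow, div_inv_eq_mul, mul_comm]
    _ ≤ _ := by
        rw [PiLp.norm_sq_eq_of_L2, Fin.sum_univ_three]
        exact add_le_add_left
          (mul_le_mul_of_nonneg_left (le_add_of_nonneg_right (sq_nonneg _)) hκ) _

lemma isCompactOperator_energySpace_fst (hα₁ : α₁ < 1 / 2) (hα₂ : α₂ < 1 / 2) :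
    IsCompactOperator ((LinearMap.fst ℝ L2Omega (PiLp 2 fun _ : Fin 3 => L2Omega)).domRestrict
      (energySpace α₁ α₂ S)) := by
  refine isCompactOperator_of_forall_norm_sq_le _ fun ε hε => ?_
  obtain ⟨N, hN⟩ := exists_nat_gt (poincareConst α₁ α₂ / ε)
  have hκ := poincareConst_nonneg hα₁ hα₂
  have hN0 : (0 : ℝ) < N := (div_nonneg hκ hε.le).trans_lt hN
  let mean : Fin N × Fin N → StrongDual ℝ (energySpace α₁ α₂ S) := fun ij =>
    (N : ℝ) • (innerSL ℝ (indicatorConstLp 2 (measurableSet_square (ij.1 / N) (ij.2 / N) (1 / N))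
      (measure_ne_top μΩ _) (1 : ℝ)) ∘L ContinuousLinearMap.fst ℝ _ _ ∘L
        (energySpace α₁ α₂ S).subtypeL)
  have hmean : ∀ ij w, mean ij w =
      N * ∫ p in square (ij.1 / N) (ij.2 / N) (1 / N), w.1.1 p ∂μΩ := fun ij w =>
    congrArg _ (L2.inner_indicatorConstLp_one _ _ w.1.1)
  refine ⟨Fin N × Fin N, inferInstance, mean, fun w => ?_⟩
  simp only [hmean]
  refine (norm_sq_le_of_mem_energySpace hα₁ hα₂ (Nat.cast_pos.1 hN0) w.2).trans
    (add_le_add_left (mul_le_mul ?_ ?_ (sq_nonneg _) hε.le) _)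
  · rw [one_div_mul_eq_div, div_le_iff₀ hN0, mul_comm]
    exact ((div_lt_iff₀ hε).1 hN).le
  · exact pow_le_pow_left₀ (norm_nonneg _) (norm_snd_le w.1) 2

end EnergySpace

/-! ### The strong maximum principle -/

section AbsoluteValue

variable {α₁ α₂ : ℝ} {S u X Y : ℝ × ℝ → ℝ} {w : L2Omega × PiLp 2 fun _ : Fin 3 => L2Omega}

lemma HasWeightedGrad.exists_mem_energySpace (h : HasWeightedGrad α₁ α₂ u X Y)
    (hS : MemLp (fun p => S p * u p) 2 μΩ) :
    ∃ w ∈ energySpace α₁ α₂ S, w.1 =ᵐ[μΩ] u ∧ w.2 0 =ᵐ[μΩ] X ∧ w.2 1 =ᵐ[μΩ] Y ∧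
      w.2 2 =ᵐ[μΩ] fun p => S p * u p := by
  obtain ⟨v, hv, h0, hx, hy⟩ := h
  refine ⟨(v.1, WithLp.toLp 2 ![v.2.1, v.2.2, hS.toLp _]), ⟨hv, hS.coeFn_toLp.trans ?_⟩, h0, hx, hy,
    hS.coeFn_toLp⟩
  filter_upwards [h0] with p hp
  rw [hp]

lemma norm_le_norm_of_ae_abs_le {Z ι : Type*} [MeasurableSpace Z] {μ : Measure Z} [Fintype ι]
    {v w : PiLp 2 fun _ : ι => Lp ℝ 2 μ}
    (h : ∀ i, ∀ᵐ p ∂μ, |v i p| ≤ |w i p|) : ‖v‖ ≤ ‖w‖ := by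
  rw [PiLp.norm_eq_of_L2, PiLp.norm_eq_of_L2]
  exact Real.sqrt_le_sqrt <| Finset.sum_le_sum fun i _ =>
    pow_le_pow_left₀ (norm_nonneg _) (Lp.norm_le_norm_of_ae_le (h i)) 2

lemma exists_mem_energySpace_abs (hw : w ∈ energySpace α₁ α₂ S) :
    ∃ v ∈ energySpace α₁ α₂ S, v.1 = |w.1| ∧ ‖v.2‖ ≤ ‖w.2‖ := by
  have hdiv : ∀ s : ℝ, |(s / |s|)| ≤ 1 := fun s => by
    rw [abs_div, abs_abs]
    exact div_self_le_one _
  have hS : MemLp (fun p => S p * |w.1 p|) 2 μΩ := by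
    have hm : AEStronglyMeasurable (fun p => w.1 p / |w.1 p|) μΩ :=
      ((Lp.stronglyMeasurable w.1).measurable.div
        (Lp.stronglyMeasurable w.1).measurable.abs).aestronglyMeasurable
    refine (memLp_congr_ae ?_).1 (memLp_two_mul_of_bounded hm (ae_of_all _ fun p => hdiv _) (w.2 2))
    filter_upwards [hw.2] with p hp
    rw [hp, mul_left_comm, div_mul_eq_mul_div, ← abs_mul_abs_self, mul_self_div_self]
  obtain ⟨v, hv, h0, hx, hy, hz⟩ := (hasWeightedGrad_abs hw.1).exists_mem_energySpace hS
  refine ⟨v, hv, Lp.ext (h0.trans (Lp.coeFn_abs _).symm), norm_le_norm_of_ae_abs_le fun i => ?_⟩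
  have hsign : ∀ s t : ℝ, |(s / |s|) * t| ≤ |t| := fun s t => by
    rw [abs_mul]
    exact mul_le_of_le_one_left (abs_nonneg t) (hdiv s)
  match i with
  | 0 => filter_upwards [hx] with p hp using hp ▸ hsign _ _
  | 1 => filter_upwards [hy] with p hp using hp ▸ hsign _ _
  | 2 =>
    filter_upwards [hz, hw.2] with p hp hp' using by simp only [hp, hp', abs_mul, abs_abs, le_refl]

lemma abs_mem_map_groundStates {f : L2Omega}
    (hf : f ∈ (groundStates (energySpace α₁ α₂ S)).map (LinearMap.fst ℝ _ _)) :
    |f| ∈ (groundStates (energySpace α₁ α₂ S)).map (LinearMap.fst ℝ _ _) := by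
  obtain ⟨w, hw, rfl⟩ := hf
  obtain ⟨v, hv, hv1, hle⟩ := exists_mem_energySpace_abs hw.1
  refine ⟨v, mem_groundStates_of_le hv ?_, hv1⟩
  rw [hv1, norm_abs_eq_norm, ← norm_sq_eq_of_mem_groundStates hw]
  exact pow_le_pow_left₀ (norm_nonneg _) hle 2

lemma inner_snd_nonneg_of_mem_groundStates {v : L2Omega × PiLp 2 fun _ : Fin 3 => L2Omega}
    (hw : w ∈ groundStates (energySpace α₁ α₂ S)) (hv : v ∈ energySpace α₁ α₂ S) (hw0 : 0 ≤ w.1)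
    (hv0 : 0 ≤ v.1) : 0 ≤ ⟪w.2, v.2⟫ := by
  rw [hw.2 v hv, Lp_two_inner]
  refine mul_nonneg rayleighInf_nonneg (integral_nonneg_of_ae ?_)
  filter_upwards [(Lp.coeFn_nonneg _).2 hw0, (Lp.coeFn_nonneg _).2 hv0] with p h h'
  exact mul_nonneg h h'

end AbsoluteValue

section Caccioppoli

lemma hasDerivAt_pi_div_two_sub_arctan (s : ℝ) :
    HasDerivAt (fun s => Real.pi / 2 - Real.arctan s) (-(1 / (1 + s ^ 2))) s :=
  (Real.hasDerivAt_arctan s).const_sub _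

lemma contDiff_pi_div_two_sub_arctan :
    ContDiff ℝ (⊤ : ℕ∞) fun s => Real.pi / 2 - Real.arctan s :=
  contDiff_const.sub Real.contDiff_arctan

lemma lipschitzWith_pi_div_two_sub_arctan :
    LipschitzWith 1 fun s => Real.pi / 2 - Real.arctan s := by
  refine lipschitzWith_of_nnnorm_deriv_le
    (contDiff_pi_div_two_sub_arctan.differentiable (by simp)) fun s => ?_
  rw [(hasDerivAt_pi_div_two_sub_arctan s).deriv, nnnorm_neg, ← NNReal.coe_le_coe, coe_nnnorm,
    NNReal.coe_one, Real.norm_of_nonneg (by positivity)]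
  exact div_le_one_of_le₀ (le_add_of_nonneg_right (sq_nonneg s)) (by positivity)

lemma abs_pi_div_two_sub_arctan_le (s : ℝ) : |Real.pi / 2 - Real.arctan s| ≤ Real.pi :=
  abs_le.2 ⟨by linarith [Real.arctan_lt_pi_div_two s, Real.pi_pos],
    by linarith [Real.neg_pi_div_two_lt_arctan s]⟩

lemma sq_pi_div_two_sub_arctan_mul_le {s : ℝ} (hs : 0 ≤ s) :
    (Real.pi / 2 - Real.arctan s) ^ 2 * (1 + s ^ 2) ≤ (Real.pi / 2) ^ 2 := by
  have hpos : 0 ≤ Real.pi / 2 - Real.arctan s := sub_nonneg.2 (Real.arctan_lt_pi_div_two s).le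
  have hjordan := Real.mul_le_sin hpos (sub_le_self _ (Real.arctan_nonneg.2 hs))
  rw [Real.sin_pi_div_two_sub] at hjordan
  have hsq := pow_le_pow_left₀ (by positivity) hjordan 2
  rw [Real.cos_sq_arctan, le_div_iff₀ (by positivity)] at hsq
  calc (Real.pi / 2 - Real.arctan s) ^ 2 * (1 + s ^ 2)
      = (Real.pi / 2) ^ 2 * ((2 / Real.pi * (Real.pi / 2 - Real.arctan s)) ^ 2 * (1 + s ^ 2)) := by
        field_simp
    _ ≤ (Real.pi / 2) ^ 2 := mul_le_of_le_one_right (sq_nonneg _) hsq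

lemma mul_pi_div_two_sub_arctan_le {s : ℝ} (hs : 0 ≤ s) :
    s * (Real.pi / 2 - Real.arctan s) ≤ Real.pi / 2 := by
  refine le_of_sq_le_sq ?_ (by positivity)
  nlinarith [sq_pi_div_two_sub_arctan_mul_le hs, sq_nonneg (Real.pi / 2 - Real.arctan s)]

lemma four_mul_pi_div_two_sub_arctan_mul_le {s : ℝ} (hs : 0 ≤ s) (m X c : ℝ) :
    4 * (Real.pi / 2 - Real.arctan s) * (m * X * c) ≤
      m ^ 2 * (X ^ 2 / (1 + s ^ 2)) + Real.pi ^ 2 * c ^ 2 := by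
  set T := Real.pi / 2 - Real.arctan s
  have hsq : 0 ≤ (m * X - 2 * T * (1 + s ^ 2) * c) ^ 2 / (1 + s ^ 2) := by positivity
  have hT : T ^ 2 * (1 + s ^ 2) * c ^ 2 ≤ (Real.pi / 2) ^ 2 * c ^ 2 :=
    mul_le_mul_of_nonneg_right (sq_pi_div_two_sub_arctan_mul_le hs) (sq_nonneg c)
  calc 4 * T * (m * X * c)
      = m ^ 2 * (X ^ 2 / (1 + s ^ 2)) + 4 * (T ^ 2 * (1 + s ^ 2) * c ^ 2) -
          (m * X - 2 * T * (1 + s ^ 2) * c) ^ 2 / (1 + s ^ 2) := by field_simp; ring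
    _ ≤ m ^ 2 * (X ^ 2 / (1 + s ^ 2)) + Real.pi ^ 2 * c ^ 2 := by linarith

lemma integrable_and_inner_eq_integral {Z : Type*} [MeasurableSpace Z] {μ : Measure Z}
    (f g : PiLp 2 fun _ : Fin 3 => Lp ℝ 2 μ) :
    Integrable (fun p => f 0 p * g 0 p + f 1 p * g 1 p + f 2 p * g 2 p) μ ∧
      ⟪f, g⟫ = ∫ p, (f 0 p * g 0 p + f 1 p * g 1 p + f 2 p * g 2 p) ∂μ := by
  have hint : ∀ i, Integrable (fun p => f i p * g i p) μ := fun i =>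
    (Lp.memLp (f i)).integrable_mul (Lp.memLp (g i))
  have h01 : Integrable (fun p => f 0 p * g 0 p + f 1 p * g 1 p) μ := (hint 0).add (hint 1)
  refine ⟨h01.add (hint 2), ?_⟩
  rw [integral_add h01 (hint 2), integral_add (hint 0) (hint 1), PiLp.inner_apply,
    Fin.sum_univ_three, Lp_two_inner, Lp_two_inner, Lp_two_inner]

variable {α₁ α₂ : ℝ} {S χ : ℝ × ℝ → ℝ} {Q : Set (ℝ × ℝ)}
  {w : L2Omega × PiLp 2 fun _ : Fin 3 => L2Omega}

/-- Nonnegative weak supersolutions `u` of the equation `a(u, ·) = 0`, given together with the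
components of the form `a`. -/
def IsNonnegSupersolution (α₁ α₂ : ℝ) (S : ℝ × ℝ → ℝ)
    (w : L2Omega × PiLp 2 fun _ : Fin 3 => L2Omega) : Prop :=
  w ∈ energySpace α₁ α₂ S ∧ 0 ≤ w.1 ∧ ∀ v ∈ energySpace α₁ α₂ S, 0 ≤ v.1 → 0 ≤ ⟪w.2, v.2⟫

lemma IsNonnegSupersolution.smul (hw : IsNonnegSupersolution α₁ α₂ S w) {c : ℝ} (hc : 0 ≤ c) :
    IsNonnegSupersolution α₁ α₂ S (c • w) := by
  refine ⟨Submodule.smul_mem _ c hw.1, (Lp.coeFn_nonneg _).1 ?_, fun v hv hv0 => ?_⟩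
  · filter_upwards [Lp.coeFn_smul c w.1, (Lp.coeFn_nonneg _).2 hw.2.1] with p hp hp0
    rw [Prod.smul_fst, hp]
    exact mul_nonneg hc hp0
  rw [Prod.smul_snd, real_inner_smul_left]
  exact mul_nonneg hc (hw.2.2 v hv hv0)

lemma IsTest.sq (hχ : IsTest χ) : IsTest fun p => χ p ^ 2 :=
  hχ.of_tsupport_subset (hχ.1.pow 2) (closure_mono fun p hp hχp => hp (by simp [hχp]))

lemma IsTest.fderiv_sq (hχ : IsTest χ) (p v : ℝ × ℝ) :
    fderiv ℝ (fun p => χ p ^ 2) p v = 2 * χ p * fderiv ℝ χ p v := by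
  rw [((hχ.differentiableAt p).hasFDerivAt.pow 2).fderiv]
  simp

lemma exists_mem_energySpace_mul_arctan (hχ : IsTest χ) (hSχ : MemLp (fun p => S p * χ p) 2 μΩ)
    (hw : w ∈ energySpace α₁ α₂ S) :
    ∃ v ∈ energySpace α₁ α₂ S,
      (v.1 =ᵐ[μΩ] fun p => (Real.pi / 2 - Real.arctan (w.1 p)) * χ p ^ 2) ∧
      (v.2 0 =ᵐ[μΩ] fun p => -(χ p ^ 2 / (1 + w.1 p ^ 2)) * w.2 0 p +
        (Real.pi / 2 - Real.arctan (w.1 p)) * (2 * χ p * (p.2 ^ α₁ * pdx χ p))) ∧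
      (v.2 1 =ᵐ[μΩ] fun p => -(χ p ^ 2 / (1 + w.1 p ^ 2)) * w.2 1 p +
        (Real.pi / 2 - Real.arctan (w.1 p)) * (2 * χ p * (p.1 ^ α₂ * pdy χ p))) ∧
      v.2 2 =ᵐ[μΩ] fun p => S p * ((Real.pi / 2 - Real.arctan (w.1 p)) * χ p ^ 2) := by
  obtain ⟨C, hC⟩ := hχ.exists_bound
  have hmem : MemLp (fun p => S p * ((Real.pi / 2 - Real.arctan (w.1 p)) * χ p ^ 2)) 2 μΩ := by
    have hm : AEStronglyMeasurable (fun p => (Real.pi / 2 - Real.arctan (w.1 p)) * χ p) μΩ :=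
      (contDiff_pi_div_two_sub_arctan.continuous.comp_aestronglyMeasurable
        (Lp.aestronglyMeasurable _)).mul hχ.1.continuous.aestronglyMeasurable
    have hb : ∀ᵐ p ∂μΩ, |(Real.pi / 2 - Real.arctan (w.1 p)) * χ p| ≤ Real.pi * C :=
      ae_of_all _ fun p => by
        rw [abs_mul]
        exact mul_le_mul (abs_pi_div_two_sub_arctan_le _) (hC p) (abs_nonneg _) Real.pi_pos.le
    refine (memLp_congr_ae ?_).1 (memLp_two_mul_of_bounded hm hb (hSχ.toLp _))
    filter_upwards [hSχ.coeFn_toLp] with p hp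
    rw [hp]
    ring
  convert! (hasWeightedGrad_mul_comp hχ.sq hw.1 contDiff_pi_div_two_sub_arctan
    lipschitzWith_pi_div_two_sub_arctan
    abs_pi_div_two_sub_arctan_le).exists_mem_energySpace hmem using 8 with v p p
  all_goals
    simp only [pdx, pdy, hχ.fderiv_sq, (hasDerivAt_pi_div_two_sub_arctan (w.1 p)).deriv]
    ring

lemma IsNonnegSupersolution.setIntegral_grad_sq_div_le (hw : IsNonnegSupersolution α₁ α₂ S w)
    (hχ : IsTest χ) (hSχ : MemLp (fun p => S p * χ p) 2 μΩ) (hQ : MeasurableSet Q)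
    (hχQ : ∀ p ∈ Q, χ p = 1) :
    ∫ p in Q, (w.2 0 p ^ 2 + w.2 1 p ^ 2) / (1 + w.1 p ^ 2) ∂μΩ ≤
      ∫ p, (Real.pi ^ 2 * ((p.2 ^ α₁ * pdx χ p) ^ 2 + (p.1 ^ α₂ * pdy χ p) ^ 2) +
        Real.pi * (S p * χ p) ^ 2) ∂μΩ := by
  obtain ⟨v, hv, hv1, hvx, hvy, hvz⟩ := exists_mem_energySpace_mul_arctan hχ hSχ hw.1
  set R : ℝ × ℝ → ℝ := fun p => Real.pi ^ 2 * ((p.2 ^ α₁ * pdx χ p) ^ 2 +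
    (p.1 ^ α₂ * pdy χ p) ^ 2) + Real.pi * (S p * χ p) ^ 2 with hR
  have hRint : Integrable R μΩ :=
    (((hχ.memLp_pdx α₁).integrable_sq.add (hχ.memLp_pdy α₂).integrable_sq).const_mul _).add
      (hSχ.integrable_sq.const_mul _)
  obtain ⟨hIint, hinner⟩ := integrable_and_inner_eq_integral w.2 v.2
  have hnonneg : 0 ≤ ⟪w.2, v.2⟫ := by
    refine hw.2.2 v hv ((Lp.coeFn_nonneg _).1 ?_)
    filter_upwards [hv1] with p hp
    rw [hp]
    exact mul_nonneg (sub_nonneg.2 (Real.arctan_lt_pi_div_two _).le) (sq_nonneg _)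
  have hpoint : ∀ᵐ p ∂μΩ, χ p ^ 2 * ((w.2 0 p ^ 2 + w.2 1 p ^ 2) / (1 + w.1 p ^ 2)) ≤
      R p - 2 * (w.2 0 p * v.2 0 p + w.2 1 p * v.2 1 p + w.2 2 p * v.2 2 p) := by
    filter_upwards [hvx, hvy, hvz, hw.1.2, (Lp.coeFn_nonneg _).2 hw.2.1] with p hx hy hz hS h0
    rw [hx, hy, hz, hS]
    have hX := four_mul_pi_div_two_sub_arctan_mul_le h0 (χ p) (w.2 0 p) (p.2 ^ α₁ * pdx χ p)
    have hY := four_mul_pi_div_two_sub_arctan_mul_le h0 (χ p) (w.2 1 p) (p.1 ^ α₂ * pdy χ p)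
    have hV := mul_le_mul_of_nonneg_left (mul_pi_div_two_sub_arctan_le h0)
      (sq_nonneg (S p * χ p))
    rw [hR]
    linear_combination hX + hY + 2 * hV
  calc ∫ p in Q, (w.2 0 p ^ 2 + w.2 1 p ^ 2) / (1 + w.1 p ^ 2) ∂μΩ
      ≤ ∫ p in Q, (R p - 2 * (w.2 0 p * v.2 0 p + w.2 1 p * v.2 1 p + w.2 2 p * v.2 2 p)) ∂μΩ := by
        refine integral_mono_of_nonneg (ae_of_all _ fun p => by positivity)
          (hRint.sub (hIint.const_mul 2)).integrableOn ?_
        filter_upwards [ae_restrict_mem hQ, ae_restrict_of_ae hpoint] with p hpQ hp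
        simpa only [hχQ p hpQ, one_pow, one_mul] using hp
    _ ≤ ∫ p, (R p - 2 * (w.2 0 p * v.2 0 p + w.2 1 p * v.2 1 p + w.2 2 p * v.2 2 p)) ∂μΩ :=
        setIntegral_le_integral (hRint.sub (hIint.const_mul 2))
          (hpoint.mono fun p hp => le_trans (by positivity) hp)
    _ = (∫ p, R p ∂μΩ) - 2 * ⟪w.2, v.2⟫ := by
        rw [integral_sub hRint (hIint.const_mul 2), hinner, integral_const_mul]
    _ ≤ ∫ p, R p ∂μΩ := by linarith

end Caccioppoli

section StrongMaximumPrinciple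

section ZeroSet

variable {Z : Type*} [MeasurableSpace Z] {ν : Measure Z} {f u : Z → ℝ}

lemma sq_integral_le_measureReal_support_mul [IsFiniteMeasure ν] (hf : MemLp f 2 ν)
    (hm : Measurable f) :
    (∫ x, f x ∂ν) ^ 2 ≤ ν.real (Function.support f) * ∫ x, f x ^ 2 ∂ν := by
  have hsupp : MeasurableSet (Function.support f) := measurableSet_support hm
  have hone : MemLp ((Function.support f).indicator fun _ => (1 : ℝ)) 2 ν :=
    (memLp_const 1).indicator hsupp
  have hcs := sq_integral_mul_le hone hf
  have hsq : ∀ x, (Function.support f).indicator (fun _ => (1 : ℝ)) x ^ 2 =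
      (Function.support f).indicator 1 x := fun x => by
    by_cases hx : x ∈ Function.support f <;> simp [hx]
  have hmul : ∀ x, (Function.support f).indicator (fun _ => (1 : ℝ)) x * f x = f x := fun x => by
    by_cases hx : f x = 0 <;> simp [hx]
  simpa only [hsq, hmul, integral_indicator_one hsupp] using hcs

lemma measureReal_eq_zero_mul_integral_sq_le [IsFiniteMeasure ν] {C : ℝ} (hf : MemLp f 2 ν)
    (hm : Measurable f) (h : ∫ x, f x ^ 2 ∂ν ≤ C + (∫ x, f x ∂ν) ^ 2 / ν.real univ) :
    ν.real {x | f x = 0} * ∫ x, f x ^ 2 ∂ν ≤ C * ν.real univ := by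
  rcases measureReal_nonneg.eq_or_lt' with h0 | hpos
  · have hz : ν.real {x | f x = 0} = 0 :=
      le_antisymm (h0 ▸ measureReal_mono (subset_univ _)) measureReal_nonneg
    rw [hz, h0, zero_mul, mul_zero]
  have hsplit : ν.real {x | f x = 0} + ν.real (Function.support f) = ν.real univ :=
    measureReal_add_measureReal_compl (measurableSet_eq_fun hm measurable_const)
  have hcs := sq_integral_le_measureReal_support_mul hf hm
  have hmul := mul_le_mul_of_nonneg_right h hpos.le
  rw [add_mul, div_mul_cancel₀ _ hpos.ne', ← hsplit] at hmul
  rw [← hsplit]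
  linarith

lemma tendsto_arsinh_natCast_mul {s : ℝ} (hs : 0 < s) :
    Tendsto (fun n : ℕ => Real.arsinh (n * s)) atTop atTop :=
  Real.sinhOrderIso.symm.tendsto_atTop.comp (tendsto_natCast_atTop_atTop.atTop_mul_const hs)

lemma ae_eq_zero_of_integral_arsinh_sq_le [IsFiniteMeasure ν] {K : ℝ} (hm : Measurable u)
    (hu : ∀ᵐ x ∂ν, 0 ≤ u x)
    (hL2 : ∀ n : ℕ, MemLp (fun x => Real.arsinh (n * u x)) 2 ν)
    (h : ∀ n : ℕ, ∫ x, Real.arsinh (n * u x) ^ 2 ∂ν ≤ K) : ∀ᵐ x ∂ν, u x = 0 := by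
  have hnorm : ∀ n : ℕ, eLpNorm (fun x => Real.arsinh (n * u x)) 2 ν ≤ (√K).toNNReal := fun n => by
    rw [(hL2 n).eLpNorm_eq_integral_rpow_norm two_ne_zero ENNReal.ofNat_ne_top,
      ENNReal.toReal_ofNat, ← one_div, ← Real.sqrt_eq_rpow]
    simp only [Real.rpow_two, Real.norm_eq_abs, sq_abs]
    exact ENNReal.ofReal_le_ofReal (Real.sqrt_le_sqrt (h n))
  have hbdd := ae_bdd_liminf_atTop_of_eLpNorm_bdd two_ne_zero
    (fun n : ℕ => Real.continuous_arsinh.measurable.comp (hm.const_mul (n : ℝ))) hnorm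
  filter_upwards [hbdd, hu] with x hx hux
  by_contra hne
  have htop : Tendsto (fun n : ℕ => ‖Real.arsinh (n * u x)‖ₑ) atTop (𝓝 ∞) := by
    simp only [← ofReal_norm]
    exact ENNReal.tendsto_ofReal_atTop.comp <| tendsto_norm_atTop_atTop.comp <|
      tendsto_arsinh_natCast_mul (hux.lt_of_ne' hne)
  exact hx.ne htop.liminf_eq

lemma ae_eq_zero_or_ae_pos_of_integral_arsinh_sq_le [IsFiniteMeasure ν] {C : ℝ} (hm : Measurable u)
    (hu : ∀ᵐ x ∂ν, 0 ≤ u x)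
    (hL2 : ∀ n : ℕ, MemLp (fun x => Real.arsinh (n * u x)) 2 ν)
    (h : ∀ n : ℕ, ∫ x, Real.arsinh (n * u x) ^ 2 ∂ν ≤
      C + (∫ x, Real.arsinh (n * u x) ∂ν) ^ 2 / ν.real univ) :
    (∀ᵐ x ∂ν, u x = 0) ∨ ∀ᵐ x ∂ν, 0 < u x := by
  rcases measureReal_nonneg.eq_or_lt' (a := ν.real {x | u x = 0}) with h0 | hpos
  · right
    rw [measureReal_eq_zero_iff] at h0
    filter_upwards [hu, measure_eq_zero_iff_ae_notMem.1 h0] with x hx hne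
    exact hx.lt_of_ne' hne
  left
  refine ae_eq_zero_of_integral_arsinh_sq_le (K := C * ν.real univ / ν.real {x | u x = 0}) hm hu hL2
    fun n => ?_
  have hsub : {x | u x = 0} ⊆ {x | Real.arsinh (n * u x) = 0} := fun x (hx : u x = 0) => by
    simp [hx]
  rw [le_div_iff₀' hpos]
  exact (mul_le_mul_of_nonneg_right (measureReal_mono hsub)
    (integral_nonneg fun x => sq_nonneg _)).trans (measureReal_eq_zero_mul_integral_sq_le (hL2 n)
      (Real.continuous_arsinh.measurable.comp (hm.const_mul (n : ℝ))) (h n))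

end ZeroSet

/-- The squares concentric with `Ω`, of half-side `r`. -/
def innerSquare (r : ℝ) : Set (ℝ × ℝ) := square (1 / 2 - r) (1 / 2 - r) (2 * r)

variable {α₁ α₂ r r' : ℝ} {S χ : ℝ × ℝ → ℝ} {w : L2Omega × PiLp 2 fun _ : Fin 3 => L2Omega}

lemma mem_innerSquare {p : ℝ × ℝ} : p ∈ innerSquare r ↔
    (1 / 2 - r < p.1 ∧ p.1 ≤ 1 / 2 + r) ∧ 1 / 2 - r < p.2 ∧ p.2 ≤ 1 / 2 + r := by
  have h : 1 / 2 - r + 2 * r = 1 / 2 + r := by ring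
  rw [innerSquare, square, h]
  rfl

lemma innerSquare_subset_innerSquare (h : r ≤ r') : innerSquare r ⊆ innerSquare r' := fun p hp => by
  rw [mem_innerSquare] at hp ⊢
  exact ⟨⟨by linarith, by linarith⟩, by linarith, by linarith⟩

lemma innerSquare_subset_unitSquare (hr : r < 1 / 2) : innerSquare r ⊆ unitSquare :=
  square_subset_unitSquare (by linarith) (by linarith) (by linarith) (by linarith)

lemma measureReal_square {a b h : ℝ} (hh : 0 ≤ h) : volume.real (square a b h) = h ^ 2 := by
  rw [square, Measure.volume_eq_prod, measureReal_prod_prod, Real.volume_real_Ioc,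
    Real.volume_real_Ioc, add_sub_cancel_left, add_sub_cancel_left, max_eq_left hh, sq]

lemma measureReal_restrict_innerSquare (hr0 : 0 ≤ r) (hr : r < 1 / 2) :
    ((μΩ).restrict (innerSquare r)).real univ = (2 * r) ^ 2 := by
  rw [restrict_Omega_restrict_of_subset (innerSquare_subset_unitSquare hr),
    measureReal_restrict_apply_univ, innerSquare, measureReal_square (by positivity)]

lemma exists_isTest_eq_one_on_innerSquare (hr0 : 0 < r) (hr : r < 1 / 2) :
    ∃ χ, IsTest χ ∧ ∀ p ∈ innerSquare r, χ p = 1 := by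
  have hball : ∀ (p : ℝ × ℝ) (ρ : ℝ), p ∈ Metric.closedBall ((1 / 2, 1 / 2) : ℝ × ℝ) ρ ↔
      (1 / 2 - ρ ≤ p.1 ∧ p.1 ≤ 1 / 2 + ρ) ∧ 1 / 2 - ρ ≤ p.2 ∧ p.2 ≤ 1 / 2 + ρ := fun p ρ => by
    rw [Metric.mem_closedBall, Prod.dist_eq, max_le_iff, ← Metric.mem_closedBall,
      ← Metric.mem_closedBall, Real.closedBall_eq_Icc, mem_Icc, mem_Icc]
  let χ : ContDiffBump ((1 / 2, 1 / 2) : ℝ × ℝ) := ⟨r, (r + 1 / 2) / 2, hr0, by linarith⟩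
  refine ⟨χ, ⟨χ.contDiff, χ.hasCompactSupport, fun p hp => ?_⟩, fun p hp => ?_⟩
  · rw [χ.tsupport_eq, hball] at hp
    obtain ⟨⟨h1, h2⟩, h3, h4⟩ := hp
    have hout : χ.rOut < 1 / 2 := by
      change (r + 1 / 2) / 2 < 1 / 2
      linarith
    exact ⟨⟨by linarith, by linarith⟩, by linarith, by linarith⟩
  · obtain ⟨⟨h1, h2⟩, h3, h4⟩ := mem_innerSquare.1 hp
    exact χ.one_of_mem_closedBall ((hball p r).2 ⟨⟨h1.le, h2⟩, h3.le, h4⟩)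

lemma ae_of_forall_innerSquare {P : ℝ × ℝ → Prop} {r₀ : ℝ} (hr₀ : r₀ < 1 / 2)
    (h : ∀ r ∈ Ioo r₀ (1 / 2), ∀ᵐ p ∂(μΩ).restrict (innerSquare r), P p) : ∀ᵐ p ∂μΩ, P p := by
  obtain ⟨r, -, hr, hlim⟩ := exists_seq_strictMono_tendsto' hr₀
  have hcover : Omega ⊆ ⋃ n, innerSquare (r n) := by
    rintro ⟨x, y⟩ ⟨⟨hx0, hx1⟩, hy0, hy1⟩
    have hlow : Tendsto (fun n => 1 / 2 - r n) atTop (𝓝 0) := by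
      convert hlim.const_sub (1 / 2) using 2
      norm_num
    have hupp : Tendsto (fun n => 1 / 2 + r n) atTop (𝓝 1) := by
      convert hlim.const_add (1 / 2) using 2
      norm_num
    obtain ⟨n, h1, h2, h3, h4⟩ := ((hlow.eventually_lt_const hx0).and <|
      (hlow.eventually_lt_const hy0).and <| (hupp.eventually_const_lt hx1).and <|
        hupp.eventually_const_lt hy1).exists
    exact mem_iUnion.2 ⟨n, mem_innerSquare.2 ⟨⟨h1, h3.le⟩, h2, h4.le⟩⟩
  have hae := (ae_restrict_iUnion_iff (μ := μΩ) _ P).2 fun n => h (r n) (hr n)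
  rw [Measure.restrict_eq_self_of_ae_mem] at hae
  · exact hae
  · exact (ae_restrict_mem measurableSet_Omega).mono hcover

lemma deriv_arsinh_sq (s : ℝ) : deriv Real.arsinh s ^ 2 = 1 / (1 + s ^ 2) := by
  rw [(Real.hasDerivAt_arsinh s).deriv, inv_pow, Real.sq_sqrt (by positivity), one_div]

lemma lipschitzWith_arsinh : LipschitzWith 1 Real.arsinh := by
  refine lipschitzWith_of_nnnorm_deriv_le Real.differentiable_arsinh fun s => ?_
  rw [← NNReal.coe_le_coe, coe_nnnorm, NNReal.coe_one, Real.norm_eq_abs, ← sq_le_one_iff_abs_le_one,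
    deriv_arsinh_sq]
  exact div_le_one_of_le₀ (le_add_of_nonneg_right (sq_nonneg s)) (by positivity)

lemma memLp_arsinh_mul_Lp (f : L2Omega) (c : ℝ) :
    MemLp (fun p => Real.arsinh (c * f p)) 2 μΩ :=
  lipschitzWith_arsinh.comp_memLp Real.arsinh_zero ((Lp.memLp f).const_mul c)

/-- The logarithmic Caccioppoli estimate, with `arsinh` in place of `log` to avoid dividing by
zero; the constant is the same for all multiples of a supersolution. -/
lemma exists_forall_setIntegral_arsinh_sq_le (hα₁ : α₁ < 1 / 2) (hα₂ : α₂ < 1 / 2)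
    (hS : ∀ χ, IsTest χ → MemLp (fun p => S p * χ p) 2 μΩ) (hr0 : 0 < r) (hr : r < 1 / 2) :
    ∃ C, ∀ w, IsNonnegSupersolution α₁ α₂ S w →
      ∫ p in innerSquare r, Real.arsinh (w.1 p) ^ 2 ∂μΩ ≤
        C + (∫ p in innerSquare r, Real.arsinh (w.1 p) ∂μΩ) ^ 2 / (2 * r) ^ 2 := by
  obtain ⟨χ, hχ, hχ1⟩ := exists_isTest_eq_one_on_innerSquare hr0 hr
  refine ⟨2 * r * poincareConst α₁ α₂ * ∫ p, (Real.pi ^ 2 * ((p.2 ^ α₁ * pdx χ p) ^ 2 +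
    (p.1 ^ α₂ * pdy χ p) ^ 2) + Real.pi * (S p * χ p) ^ 2) ∂μΩ, fun w hw => ?_⟩
  obtain ⟨v, hv, h0, hx, hy⟩ := hasWeightedGrad_comp hw.1.1 Real.contDiff_arsinh Real.arsinh_zero
    lipschitzWith_arsinh
  have hpoincare := setIntegral_square_sq_le hα₁ hα₂ (mul_pos two_pos hr0)
    (innerSquare_subset_unitSquare hr) hv
  have hgrad : (∫ p in innerSquare r, v.2.1 p ^ 2 ∂μΩ) + ∫ p in innerSquare r, v.2.2 p ^ 2 ∂μΩ =
      ∫ p in innerSquare r, (w.2 0 p ^ 2 + w.2 1 p ^ 2) / (1 + w.1 p ^ 2) ∂μΩ := by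
    rw [← integral_add (Lp.memLp v.2.1).integrable_sq.integrableOn
      (Lp.memLp v.2.2).integrable_sq.integrableOn]
    refine integral_congr_ae (ae_restrict_of_ae ?_)
    filter_upwards [hx, hy] with p hpx hpy
    rw [hpx, hpy, mul_pow, mul_pow, deriv_arsinh_sq]
    ring
  change ∫ p in innerSquare r, _ ∂μΩ ≤ _ * ((∫ p in innerSquare r, _ ∂μΩ) +
    ∫ p in innerSquare r, _ ∂μΩ) + (∫ p in innerSquare r, _ ∂μΩ) ^ 2 / _ at hpoincare
  have hsq : (fun p => v.1 p ^ 2) =ᵐ[μΩ] fun p => Real.arsinh (w.1 p) ^ 2 :=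
    h0.fun_comp (· ^ 2)
  rw [hgrad, integral_congr_ae (ae_restrict_of_ae h0),
    integral_congr_ae (ae_restrict_of_ae hsq)] at hpoincare
  refine hpoincare.trans (add_le_add_left (mul_le_mul_of_nonneg_left ?_ ?_) _)
  · exact hw.setIntegral_grad_sq_div_le hχ (hS χ hχ) (measurableSet_square _ _ _) hχ1
  · exact mul_nonneg (by positivity) (poincareConst_nonneg hα₁ hα₂)

lemma IsNonnegSupersolution.ae_eq_zero_or_ae_pos (hw : IsNonnegSupersolution α₁ α₂ S w)
    (hα₁ : α₁ < 1 / 2) (hα₂ : α₂ < 1 / 2) (hS : ∀ χ, IsTest χ → MemLp (fun p => S p * χ p) 2 μΩ)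
    (hr0 : 0 < r) (hr : r < 1 / 2) :
    (∀ᵐ p ∂(μΩ).restrict (innerSquare r), w.1 p = 0) ∨
      ∀ᵐ p ∂(μΩ).restrict (innerSquare r), 0 < w.1 p := by
  obtain ⟨C, hC⟩ := exists_forall_setIntegral_arsinh_sq_le hα₁ hα₂ hS hr0 hr
  refine ae_eq_zero_or_ae_pos_of_integral_arsinh_sq_le (C := C)
    (Lp.stronglyMeasurable w.1).measurable (ae_restrict_of_ae ((Lp.coeFn_nonneg _).2 hw.2.1))
    (fun n => (memLp_arsinh_mul_Lp w.1 n).restrict _) fun n => ?_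
  have hn : (fun p => ((n : ℝ) • w).1 p) =ᵐ[(μΩ).restrict (innerSquare r)] fun p => n * w.1 p :=
    ae_restrict_of_ae (Lp.coeFn_smul _ _)
  have hn' : ∀ᵐ p ∂(μΩ).restrict (innerSquare r),
      Real.arsinh (((n : ℝ) • w).1 p) = Real.arsinh (n * w.1 p) := hn.fun_comp Real.arsinh
  have hle := hC _ (hw.smul n.cast_nonneg)
  rw [integral_congr_ae hn', integral_congr_ae (hn'.mono fun p hp => congrArg (· ^ 2) hp)] at hle
  rwa [measureReal_restrict_innerSquare hr0.le hr]

lemma IsNonnegSupersolution.ae_pos (hw : IsNonnegSupersolution α₁ α₂ S w)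
    (hα₁ : α₁ < 1 / 2) (hα₂ : α₂ < 1 / 2) (hS : ∀ χ, IsTest χ → MemLp (fun p => S p * χ p) 2 μΩ)
    (hne : w.1 ≠ 0) : ∀ᵐ p ∂μΩ, 0 < w.1 p := by
  have hdich : ∀ r ∈ Ico (1 / 4 : ℝ) (1 / 2), _ := fun r hr =>
    hw.ae_eq_zero_or_ae_pos hα₁ hα₂ hS ((by norm_num : (0 : ℝ) < 1 / 4).trans_le hr.1) hr.2
  have hmono : ∀ {r : ℝ}, 1 / 4 ≤ r → ae ((μΩ).restrict (innerSquare (1 / 4))) ≤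
      ae ((μΩ).restrict (innerSquare r)) := fun h =>
    ae_mono (Measure.restrict_mono_set _ (innerSquare_subset_innerSquare h))
  have : NeZero ((μΩ).restrict (innerSquare (1 / 4))) := ⟨fun h => by
    have h0 := measureReal_restrict_innerSquare (r := 1 / 4) (by norm_num) (by norm_num)
    norm_num [h] at h0⟩
  have hexcl : ¬((∀ᵐ p ∂(μΩ).restrict (innerSquare (1 / 4)), w.1 p = 0) ∧
      ∀ᵐ p ∂(μΩ).restrict (innerSquare (1 / 4)), 0 < w.1 p) := fun ⟨hzero, hpos⟩ => by
    obtain ⟨p, h0, hp⟩ := (hzero.and hpos).exists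
    exact hp.ne' h0
  rcases hdich (1 / 4) (by norm_num) with hzero | hpos
  · have hzero' : w.1 =ᵐ[μΩ] (0 : ℝ × ℝ → ℝ) :=
      ae_of_forall_innerSquare (by norm_num) fun r hr => (hdich r ⟨hr.1.le, hr.2⟩).resolve_right
        fun hpos => hexcl ⟨hzero, hmono hr.1.le hpos⟩
    exact absurd ((Lp.eq_zero_iff_ae_eq_zero).2 hzero') hne
  · exact ae_of_forall_innerSquare (by norm_num) fun r hr => (hdich r ⟨hr.1.le, hr.2⟩).resolve_left
      fun hzero => hexcl ⟨hmono hr.1.le hzero, hpos⟩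

end StrongMaximumPrinciple

/-! ### Weak derivatives and eigenfunctions -/

section WeakDerivatives

variable {α α₁ α₂ : ℝ} {φ ψ c g u X Y gx gy : ℝ × ℝ → ℝ}

lemma IsTest.eq_zero_of_notMem (hφ : IsTest φ) {p : ℝ × ℝ} (hp : p ∉ Omega) : φ p = 0 :=
  image_eq_zero_of_notMem_tsupport fun h => hp (hφ.2.2 h)

lemma IsTest.integral_mul_fderiv (hφ : IsTest φ) (hψ : IsTest ψ) (e : ℝ × ℝ) :
    ∫ p, φ p * fderiv ℝ ψ p e ∂μΩ = -∫ p, fderiv ℝ φ p e * ψ p ∂μΩ := by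
  have hcont : ∀ {χ}, IsTest χ → Continuous fun p => fderiv ℝ χ p e := fun hχ =>
    (hχ.contDiff_one.continuous_fderiv one_ne_zero).clm_apply continuous_const
  rw [setIntegral_eq_integral_of_forall_compl_eq_zero fun p hp => by
      rw [hφ.eq_zero_of_notMem hp, zero_mul],
    setIntegral_eq_integral_of_forall_compl_eq_zero fun p hp => by
      rw [hψ.eq_zero_of_notMem hp, mul_zero]]
  exact integral_mul_fderiv_eq_neg_fderiv_mul_of_integrable
    (((hcont hφ).mul hψ.1.continuous).integrable_of_hasCompactSupport hψ.2.1.mul_left)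
    ((hφ.1.continuous.mul (hcont hψ)).integrable_of_hasCompactSupport hφ.2.1.mul_right)
    ((hφ.1.continuous.mul hψ.1.continuous).integrable_of_hasCompactSupport hφ.2.1.mul_right)
    (fun p _ => hφ.differentiableAt p) fun p _ => hψ.differentiableAt p

lemma rpow_mul_rpow_neg {t : ℝ} (ht : 0 < t) (α : ℝ) : t ^ α * t ^ (-α) = 1 := by
  rw [← Real.rpow_add ht, add_neg_cancel, Real.rpow_zero]

lemma integral_mul_fderiv_of_mem_closure (hc : Continuous c) (hcpos : ∀ p ∈ Omega, 0 < c p)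
    {e : ℝ × ℝ} {T : Set (L2Omega × L2Omega)} (hT : ∀ v ∈ T, ∃ φ, IsTest φ ∧ v.1 =ᵐ[μΩ] φ ∧
      v.2 =ᵐ[μΩ] fun p => c p ^ α * fderiv ℝ φ p e) {w : L2Omega × L2Omega} (hw : w ∈ closure T)
    (hu : w.1 =ᵐ[μΩ] u) (hg : w.2 =ᵐ[μΩ] fun p => c p ^ α * g p) (hψ : IsTest ψ) :
    ∫ p, u p * fderiv ℝ ψ p e ∂μΩ = -∫ p, g p * ψ p ∂μΩ := by
  have hA : MemLp (fun p => fderiv ℝ ψ p e) 2 μΩ :=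
    (((hψ.contDiff_one.continuous_fderiv one_ne_zero).clm_apply
      continuous_const).memLp_of_hasCompactSupport (hψ.2.1.fderiv_apply ℝ e)).restrict _
  have hB : MemLp (fun p => c p ^ (-α) * ψ p) 2 μΩ :=
    ((continuous_rpow_mul hc hcpos hψ.1.continuous hψ.2.2).memLp_of_hasCompactSupport
      hψ.2.1.mul_left).restrict _
  have hinner : ∀ {v : L2Omega × L2Omega} {u' g' : ℝ × ℝ → ℝ}, v.1 =ᵐ[μΩ] u' →
      (v.2 =ᵐ[μΩ] fun p => c p ^ α * g' p) →
      ⟪v.1, hA.toLp⟫ = ∫ p, u' p * fderiv ℝ ψ p e ∂μΩ ∧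
      ⟪v.2, hB.toLp⟫ = ∫ p, g' p * ψ p ∂μΩ := fun {_ _ g'} hu hg => by
    rw [Lp_two_inner, Lp_two_inner]
    refine ⟨integral_congr_ae ?_, integral_congr_ae ?_⟩
    · filter_upwards [hu, hA.coeFn_toLp] with p h h'
      rw [h, h']
    · filter_upwards [hg, hB.coeFn_toLp, ae_restrict_mem measurableSet_Omega] with p h h' hp
      rw [h, h']
      linear_combination g' p * ψ p * rpow_mul_rpow_neg (hcpos p hp) α
  have hclosed : IsClosed {v : L2Omega × L2Omega | ⟪v.1, hA.toLp⟫ = -⟪v.2, hB.toLp⟫} :=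
    isClosed_eq (continuous_fst.inner continuous_const)
      (continuous_snd.inner continuous_const).neg
  have hmem := closure_minimal (fun v hv => by
    obtain ⟨φ, hφ, h1, h2⟩ := hT v hv
    rw [mem_ofPred_eq, (hinner h1 h2).1, (hinner h1 h2).2]
    exact hφ.integral_mul_fderiv hψ e) hclosed hw
  rwa [mem_ofPred_eq, (hinner hu hg).1, (hinner hu hg).2] at hmem

lemma locallyIntegrableOn_of_memLp_rpow_mul (hc : Continuous c) (hcpos : ∀ p ∈ Omega, 0 < c p)
    (h : MemLp (fun p => c p ^ α * g p) 2 μΩ) : LocallyIntegrableOn g Omega volume := by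
  rw [locallyIntegrableOn_iff isOpen_Omega.isLocallyClosed]
  intro K hK hKc
  have hint : IntegrableOn (fun p => c p ^ α * g p) K volume :=
    IntegrableOn.mono_set (h.integrable one_le_two) hK
  have hcont : ContinuousOn (fun p => c p ^ (-α)) K := fun p hp =>
    (hc.continuousAt.rpow_const (Or.inl (hcpos p (hK hp)).ne')).continuousWithinAt
  refine (hint.mul_continuousOn hcont hKc).congr_fun (fun p hp => ?_) hKc.measurableSet
  linear_combination g p * rpow_mul_rpow_neg (hcpos p (hK hp)) α

lemma HasWeightedGrad.locallyIntegrableOn (h : HasWeightedGrad α₁ α₂ u X Y) :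
    LocallyIntegrableOn u Omega volume :=
  IntegrableOn.locallyIntegrableOn (h.memLp.1.integrable one_le_two)

lemma HasWeightedGrad.hasWeakDerivXOn
    (h : HasWeightedGrad α₁ α₂ u (fun p => p.2 ^ α₁ * gx p) Y) : HasWeakDerivXOn Omega u gx := by
  have hpos : ∀ p ∈ Omega, 0 < p.2 := fun p hp => hp.2.1
  refine ⟨h.locallyIntegrableOn,
    locallyIntegrableOn_of_memLp_rpow_mul continuous_snd hpos h.memLp.2.1, fun ψ hψ => ?_⟩
  obtain ⟨w, hw, hu, hx, -⟩ := h
  refine integral_mul_fderiv_of_mem_closure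
    (T := (fun w : L2Omega × L2Omega × L2Omega => (w.1, w.2.1)) '' testGraph α₁ α₂)
    continuous_snd hpos ?_
    (image_closure_subset_closure_image (by fun_prop)
      (mem_image_of_mem _ hw)) hu hx hψ
  rintro _ ⟨v, ⟨φ, hφ, h0, hφx, -⟩, rfl⟩
  exact ⟨φ, hφ, h0, hφx⟩

lemma HasWeightedGrad.hasWeakDerivYOn
    (h : HasWeightedGrad α₁ α₂ u X fun p => p.1 ^ α₂ * gy p) : HasWeakDerivYOn Omega u gy := by
  have hpos : ∀ p ∈ Omega, 0 < p.1 := fun p hp => hp.1.1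
  refine ⟨h.locallyIntegrableOn,
    locallyIntegrableOn_of_memLp_rpow_mul continuous_fst hpos h.memLp.2.2, fun ψ hψ => ?_⟩
  obtain ⟨w, hw, hu, -, hy⟩ := h
  refine integral_mul_fderiv_of_mem_closure
    (T := (fun w : L2Omega × L2Omega × L2Omega => (w.1, w.2.2)) '' testGraph α₁ α₂)
    continuous_fst hpos ?_
    (image_closure_subset_closure_image (by fun_prop)
      (mem_image_of_mem _ hw)) hu hy hψ
  rintro _ ⟨v, ⟨φ, hφ, h0, -, hφy⟩, rfl⟩
  exact ⟨φ, hφ, h0, hφy⟩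

/-- `w` is the class of `(u, y^α₁ gx, x^α₂ gy)`. -/
def RepresentsGrad (α₁ α₂ : ℝ) (w : L2Omega × L2Omega × L2Omega) (u gx gy : ℝ × ℝ → ℝ) : Prop :=
  w.1 =ᵐ[μΩ] u ∧ w.2.1 =ᵐ[μΩ] (fun p => p.2 ^ α₁ * gx p) ∧
    w.2.2 =ᵐ[μΩ] fun p => p.1 ^ α₂ * gy p

variable {w v : L2Omega × L2Omega × L2Omega}

lemma RepresentsGrad.sub {u' gx' gy' : ℝ × ℝ → ℝ} (hw : RepresentsGrad α₁ α₂ w u gx gy)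
    (hv : RepresentsGrad α₁ α₂ v u' gx' gy') :
    RepresentsGrad α₁ α₂ (w - v) (fun p => u p - u' p) (fun p => gx p - gx' p)
      fun p => gy p - gy' p := by
  simp only [RepresentsGrad, mul_sub]
  exact ⟨(Lp.coeFn_sub _ _).trans (hw.1.sub hv.1), (Lp.coeFn_sub _ _).trans (hw.2.1.sub hv.2.1),
    (Lp.coeFn_sub _ _).trans (hw.2.2.sub hv.2.2)⟩

lemma RepresentsGrad.h1Norm_eq (hw : RepresentsGrad α₁ α₂ w u gx gy) :
    H1Norm α₁ α₂ u gx gy = √(‖w.1‖ ^ 2 + ‖w.2.1‖ ^ 2 + ‖w.2.2‖ ^ 2) := by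
  have hsq : ∀ {f : L2Omega} {g : ℝ × ℝ → ℝ}, f =ᵐ[μΩ] g → ∫ p, g p ^ 2 ∂μΩ = ‖f‖ ^ 2 :=
    fun {f g} h => by
      rw [Lp_two_norm_sq]
      exact integral_congr_ae (h.mono fun p hp => by simp only [hp])
  rw [H1Norm, hsq hw.1, hsq hw.2.1, hsq hw.2.2]

lemma RepresentsGrad.norm_le (hw : RepresentsGrad α₁ α₂ w u gx gy) :
    ‖w‖ ≤ H1Norm α₁ α₂ u gx gy := by
  have h1 := sq_nonneg ‖w.1‖
  have h2 := sq_nonneg ‖w.2.1‖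
  have h3 := sq_nonneg ‖w.2.2‖
  rw [hw.h1Norm_eq, Prod.norm_def, Prod.norm_def]
  exact max_le (Real.le_sqrt_of_sq_le (by linarith))
    (max_le (Real.le_sqrt_of_sq_le (by linarith)) (Real.le_sqrt_of_sq_le (by linarith)))

lemma RepresentsGrad.h1Norm_le (hw : RepresentsGrad α₁ α₂ w u gx gy) :
    H1Norm α₁ α₂ u gx gy ≤ 2 * ‖w‖ := by
  have h1 := pow_le_pow_left₀ (norm_nonneg _) (norm_fst_le w) 2
  have h2 := pow_le_pow_left₀ (norm_nonneg _) ((norm_fst_le w.2).trans (norm_snd_le w)) 2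
  have h3 := pow_le_pow_left₀ (norm_nonneg _) ((norm_snd_le w.2).trans (norm_snd_le w)) 2
  rw [hw.h1Norm_eq]
  exact Real.sqrt_le_iff.2 ⟨by positivity, by nlinarith [sq_nonneg ‖w‖]⟩

lemma memH10_iff_hasWeightedGrad : MemH10 α₁ α₂ u gx gy ↔
    HasWeightedGrad α₁ α₂ u (fun p => p.2 ^ α₁ * gx p) fun p => p.1 ^ α₂ * gy p := by
  refine ⟨fun h => ?_, fun h => ⟨⟨h.memLp.1, h.hasWeakDerivXOn, h.hasWeakDerivYOn, h.memLp.2.1,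
    h.memLp.2.2⟩, fun ε hε => ?_⟩⟩
  · have hw : RepresentsGrad α₁ α₂ (h.1.memL2.toLp, h.1.wgx.toLp, h.1.wgy.toLp) u gx gy :=
      ⟨h.1.memL2.coeFn_toLp, h.1.wgx.coeFn_toLp, h.1.wgy.coeFn_toLp⟩
    refine ⟨_, Metric.mem_closure_iff.2 fun ε hε => ?_, hw⟩
    obtain ⟨φ, hφ, hlt⟩ := h.2 ε hε
    have hv : RepresentsGrad α₁ α₂ (hφ.memLp.toLp, (hφ.memLp_pdx α₁).toLp, (hφ.memLp_pdy α₂).toLp)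
        φ (pdx φ) (pdy φ) :=
      ⟨hφ.memLp.coeFn_toLp, (hφ.memLp_pdx α₁).coeFn_toLp, (hφ.memLp_pdy α₂).coeFn_toLp⟩
    exact ⟨_, ⟨φ, hφ, hv⟩, (dist_eq_norm _ _).trans_lt ((hw.sub hv).norm_le.trans_lt hlt)⟩
  · obtain ⟨w, hw, hrep⟩ := h
    obtain ⟨v, ⟨φ, hφ, hv⟩, hdist⟩ := Metric.mem_closure_iff.1 hw (ε / 2) (half_pos hε)
    rw [dist_eq_norm] at hdist
    exact ⟨φ, hφ, (RepresentsGrad.sub hrep hv).h1Norm_le.trans_lt (by linarith)⟩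

end WeakDerivatives

section Eigenfunctions

variable {α₁ α₂ : ℝ} {V u gx gy u' gx' gy' : ℝ × ℝ → ℝ}
  {w v : L2Omega × PiLp 2 fun _ : Fin 3 => L2Omega}

/-- `w` is the class of `(u, (y^α₁ gx, x^α₂ gy, √V u))`, so that `‖w.2‖ ^ 2 = a(u, u)`. -/
def RepresentsEnergy (α₁ α₂ : ℝ) (V : ℝ × ℝ → ℝ) (w : L2Omega × PiLp 2 fun _ : Fin 3 => L2Omega)
    (u gx gy : ℝ × ℝ → ℝ) : Prop :=
  RepresentsGrad α₁ α₂ (w.1, w.2 0, w.2 1) u gx gy ∧ w.2 2 =ᵐ[μΩ] fun p => √(V p) * u p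

lemma sq_sqrt_mul_ae_eq (hV0 : ∀ᵐ p ∂μΩ, 0 ≤ V p) (u : ℝ × ℝ → ℝ) :
    (fun p => (√(V p) * u p) ^ 2) =ᵐ[μΩ] fun p => V p * u p ^ 2 :=
  hV0.mono fun p hp => by simp only [mul_pow, Real.sq_sqrt hp]

lemma MemH0.exists_representsEnergy (hu : MemH0 α₁ α₂ V u gx gy)
    (hVm : AEStronglyMeasurable V μΩ) (hV0 : ∀ᵐ p ∂μΩ, 0 ≤ V p) :
    ∃ w ∈ energySpace α₁ α₂ (fun p => √(V p)), RepresentsEnergy α₁ α₂ V w u gx gy := by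
  have hS : MemLp (fun p => √(V p) * u p) 2 μΩ :=
    (memLp_two_iff_integrable_sq
      ((Real.continuous_sqrt.comp_aestronglyMeasurable hVm).mul hu.1.1.memL2.1)).2
      (hu.2.congr (sq_sqrt_mul_ae_eq hV0 u).symm)
  obtain ⟨w, hw, h0, hx, hy, hz⟩ := (memH10_iff_hasWeightedGrad.1 hu.1).exists_mem_energySpace hS
  exact ⟨w, hw, ⟨h0, hx, hy⟩, hz⟩

lemma RepresentsEnergy.memH0 (hw : RepresentsEnergy α₁ α₂ V w u gx gy)
    (hwE : w ∈ energySpace α₁ α₂ fun p => √(V p)) (hV0 : ∀ᵐ p ∂μΩ, 0 ≤ V p) :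
    MemH0 α₁ α₂ V u gx gy :=
  ⟨memH10_iff_hasWeightedGrad.2 ⟨_, hwE.1, hw.1⟩,
    (((memLp_congr_ae hw.2).1 (Lp.memLp _)).integrable_sq).congr (sq_sqrt_mul_ae_eq hV0 u)⟩

lemma exists_representsEnergy_of_mem_energySpace
    (hw : w ∈ energySpace α₁ α₂ fun p => √(V p)) :
    ∃ gx gy, RepresentsEnergy α₁ α₂ V w w.1 gx gy := by
  have hcancel : ∀ {t : ℝ}, 0 < t → ∀ α x : ℝ, x = t ^ α * (t ^ (-α) * x) := fun ht α x => by
    rw [← mul_assoc, rpow_mul_rpow_neg ht, one_mul]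
  refine ⟨fun p => p.2 ^ (-α₁) * w.2 0 p, fun p => p.1 ^ (-α₂) * w.2 1 p,
    ⟨ae_eq_refl _, ?_, ?_⟩, hw.2⟩ <;>
  filter_upwards [ae_restrict_mem measurableSet_Omega] with p hp
  exacts [hcancel hp.2.1 α₁ _, hcancel hp.1.1 α₂ _]

lemma RepresentsEnergy.integral_mul_eq (hw : RepresentsEnergy α₁ α₂ V w u gx gy)
    (hv : RepresentsEnergy α₁ α₂ V v u' gx' gy') : ∫ p, u p * u' p ∂μΩ = ⟪w.1, v.1⟫ := by
  rw [Lp_two_inner]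
  refine integral_congr_ae ?_
  filter_upwards [hw.1.1, hv.1.1] with p h h'
  rw [h, h']

lemma RepresentsEnergy.aForm_eq (hw : RepresentsEnergy α₁ α₂ V w u gx gy)
    (hv : RepresentsEnergy α₁ α₂ V v u' gx' gy') (hV0 : ∀ᵐ p ∂μΩ, 0 ≤ V p) :
    aForm α₁ α₂ V u gx gy u' gx' gy' = ⟪w.2, v.2⟫ := by
  obtain ⟨⟨-, hwx, hwy⟩, hwz⟩ := hw
  obtain ⟨⟨-, hvx, hvy⟩, hvz⟩ := hv
  rw [(integrable_and_inner_eq_integral w.2 v.2).2, aForm]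
  refine integral_congr_ae ?_
  filter_upwards [hV0, hwx, hwy, hwz, hvx, hvy, hvz] with p hp h0 h1 h2 h0' h1' h2'
  rw [h0, h1, h2, h0', h1', h2', mul_mul_mul_comm (√(V p)), Real.mul_self_sqrt hp,
    mul_assoc (V p)]

lemma lam1_eq_rayleighInf (hVm : AEStronglyMeasurable V μΩ) (hV0 : ∀ᵐ p ∂μΩ, 0 ≤ V p) :
    lam1 α₁ α₂ V = rayleighInf (energySpace α₁ α₂ fun p => √(V p)) := by
  have hnorm : ∀ {w u gx gy}, RepresentsEnergy α₁ α₂ V w u gx gy →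
      ((∫ p, u p ^ 2 ∂μΩ) = 1 ↔ ‖w.1‖ = 1) := fun {w u gx gy} hw => by
    simp only [sq]
    rw [hw.integral_mul_eq hw, real_inner_self_eq_norm_sq,
      pow_eq_one_iff_of_nonneg (norm_nonneg _) two_ne_zero]
  refine congrArg sInf (Set.ext fun r => ⟨?_, ?_⟩)
  · rintro ⟨u, gx, gy, hu, h1, rfl⟩
    obtain ⟨w, hwE, hw⟩ := hu.exists_representsEnergy hVm hV0
    exact ⟨w, hwE, (hnorm hw).1 h1, by rw [hw.aForm_eq hw hV0, real_inner_self_eq_norm_sq]⟩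
  · rintro ⟨w, hwE, h1, rfl⟩
    obtain ⟨gx, gy, hw⟩ := exists_representsEnergy_of_mem_energySpace hwE
    exact ⟨_, gx, gy, hw.memH0 hwE hV0, (hnorm hw).2 h1,
      by rw [hw.aForm_eq hw hV0, real_inner_self_eq_norm_sq]⟩

lemma RepresentsEnergy.isEigenfun_iff (hw : RepresentsEnergy α₁ α₂ V w u gx gy)
    (hwE : w ∈ energySpace α₁ α₂ fun p => √(V p)) (hVm : AEStronglyMeasurable V μΩ)
    (hV0 : ∀ᵐ p ∂μΩ, 0 ≤ V p) :
    IsEigenfun α₁ α₂ V (lam1 α₁ α₂ V) u gx gy ↔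
      w ∈ groundStates (energySpace α₁ α₂ fun p => √(V p)) := by
  rw [IsEigenfun, lam1_eq_rayleighInf hVm hV0]
  refine ⟨fun h => ⟨hwE, fun v hvE => ?_⟩, fun h => ⟨hw.memH0 hwE hV0, fun u' gx' gy' hu' => ?_⟩⟩
  · obtain ⟨gx', gy', hv⟩ := exists_representsEnergy_of_mem_energySpace hvE
    rw [← hw.aForm_eq hv hV0, ← hw.integral_mul_eq hv]
    exact h.2 _ gx' gy' (hv.memH0 hvE hV0)
  · obtain ⟨v, hvE, hv⟩ := hu'.exists_representsEnergy hVm hV0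
    rw [hw.aForm_eq hv hV0, hw.integral_mul_eq hv]
    exact h.2 v hvE

lemma IsEigenfun.exists_mem_map_groundStates (hu : IsEigenfun α₁ α₂ V (lam1 α₁ α₂ V) u gx gy)
    (hVm : AEStronglyMeasurable V μΩ) (hV0 : ∀ᵐ p ∂μΩ, 0 ≤ V p) :
    ∃ f ∈ (groundStates (energySpace α₁ α₂ fun p => √(V p))).map (LinearMap.fst ℝ _ _),
      f =ᵐ[μΩ] u := by
  obtain ⟨w, hwE, hw⟩ := hu.1.exists_representsEnergy hVm hV0
  exact ⟨w.1, ⟨w, (hw.isEigenfun_iff hwE hVm hV0).1 hu, rfl⟩, hw.1.1⟩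

lemma exists_isEigenfun_of_mem_map_groundStates {f : L2Omega}
    (hf : f ∈ (groundStates (energySpace α₁ α₂ fun p => √(V p))).map (LinearMap.fst ℝ _ _))
    (hVm : AEStronglyMeasurable V μΩ) (hV0 : ∀ᵐ p ∂μΩ, 0 ≤ V p) :
    ∃ gx gy, IsEigenfun α₁ α₂ V (lam1 α₁ α₂ V) f gx gy := by
  obtain ⟨w, hw, rfl⟩ := hf
  obtain ⟨gx, gy, hrep⟩ := exists_representsEnergy_of_mem_energySpace hw.1
  exact ⟨gx, gy, (hrep.isEigenfun_iff hw.1 hVm hV0).2 hw⟩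

end Eigenfunctions

section GroundState

variable {α₁ α₂ : ℝ} {S V χ : ℝ × ℝ → ℝ}

lemma IsTest.memLp_sqrt_mul (hχ : IsTest χ) (hV : LocallyIntegrableOn V Omega volume)
    (hV0 : ∀ᵐ p ∂μΩ, 0 ≤ V p) : MemLp (fun p => √(V p) * χ p) 2 μΩ := by
  have hint : IntegrableOn (fun p => V p * χ p ^ 2) (tsupport χ) volume :=
    (hV.integrableOn_compact_subset hχ.2.2 hχ.2.1).mul_continuousOn
      (hχ.1.continuous.pow 2).continuousOn hχ.2.1
  refine (memLp_two_iff_integrable_sq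
    ((Real.continuous_sqrt.comp_aestronglyMeasurable hV.aestronglyMeasurable).mul
      hχ.1.continuous.aestronglyMeasurable)).2 (Integrable.congr ?_ (sq_sqrt_mul_ae_eq hV0 χ).symm)
  refine ((integrableOn_iff_integrable_of_support_subset fun p hp => ?_).1 hint).restrict
  exact subset_tsupport χ fun h => hp (by simp only [h, ne_eq, OfNat.ofNat_ne_zero,
    not_false_eq_true, zero_pow, mul_zero])

lemma exists_mem_energySpace_fst_ne_zero
    (hS : ∀ χ, IsTest χ → MemLp (fun p => S p * χ p) 2 μΩ) :
    ∃ w ∈ energySpace α₁ α₂ S, w.1 ≠ 0 := by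
  obtain ⟨χ, hχ, hχ1⟩ :=
    exists_isTest_eq_one_on_innerSquare (r := 1 / 4) (by norm_num) (by norm_num)
  obtain ⟨w, hw, h0, -⟩ := (hχ.hasWeightedGrad α₁ α₂).exists_mem_energySpace (hS χ hχ)
  refine ⟨w, hw, fun hzero => ?_⟩
  have hfalse : ∀ᵐ _ ∂(μΩ).restrict (innerSquare (1 / 4)), False := by
    filter_upwards [ae_restrict_of_ae h0, ae_restrict_of_ae ((Lp.eq_zero_iff_ae_eq_zero).1 hzero),
      ae_restrict_mem (measurableSet_square _ _ _)] with p h h' hp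
    exact one_ne_zero ((hχ1 p hp).symm.trans (h.symm.trans h'))
  have hmeas := measureReal_restrict_innerSquare (r := 1 / 4) (by norm_num) (by norm_num)
  rw [ae_eq_bot.1 (eventually_false_iff_eq_bot.1 hfalse)] at hmeas
  norm_num at hmeas

lemma ae_pos_of_mem_map_groundStates (hα₁ : α₁ < 1 / 2) (hα₂ : α₂ < 1 / 2)
    (hS : ∀ χ, IsTest χ → MemLp (fun p => S p * χ p) 2 μΩ) {f : L2Omega}
    (hf : f ∈ (groundStates (energySpace α₁ α₂ S)).map (LinearMap.fst ℝ _ _)) (hf0 : 0 ≤ f)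
    (hne : f ≠ 0) : ∀ᵐ p ∂μΩ, 0 < f p := by
  obtain ⟨w, hw, rfl⟩ := hf
  exact IsNonnegSupersolution.ae_pos
    ⟨hw.1, hf0, fun v hv hv0 => inner_snd_nonneg_of_mem_groundStates hw hv hf0 hv0⟩ hα₁ hα₂ hS hne

lemma exists_pos_mem_map_groundStates (hα₁ : α₁ < 1 / 2) (hα₂ : α₂ < 1 / 2)
    (hS : ∀ χ, IsTest χ → MemLp (fun p => S p * χ p) 2 μΩ) :
    ∃ f ∈ (groundStates (energySpace α₁ α₂ S)).map (LinearMap.fst ℝ _ _),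
      ∀ᵐ p ∂μΩ, 0 < f p := by
  obtain ⟨w, hw, hne⟩ := exists_mem_groundStates isClosed_energySpace
    (isCompactOperator_energySpace_fst hα₁ hα₂) (exists_mem_energySpace_fst_ne_zero hS)
  have habs := abs_mem_map_groundStates ⟨w, hw, rfl⟩
  exact ⟨_, habs, ae_pos_of_mem_map_groundStates hα₁ hα₂ hS habs (abs_nonneg _)
    (norm_ne_zero_iff.1 (by rwa [norm_abs_eq_norm, norm_ne_zero_iff]))⟩

end GroundState

theorem ground_state_simple_positive_general {α₁ α₂ : ℝ} (hα₁ : α₁ < 1 / 2) (hα₂ : α₂ < 1 / 2)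
    {V : ℝ × ℝ → ℝ} (hV : LocallyIntegrableOn V Omega volume)
    (hV0 : ∀ᵐ p ∂(volume.restrict Omega), 0 ≤ V p) :
    ∃ u₁ g₁x g₁y : ℝ × ℝ → ℝ,
      IsEigenfun α₁ α₂ V (lam1 α₁ α₂ V) u₁ g₁x g₁y ∧
      (∀ᵐ p ∂(volume.restrict Omega), 0 < u₁ p) ∧
      (∀ u gx gy : ℝ × ℝ → ℝ, IsEigenfun α₁ α₂ V (lam1 α₁ α₂ V) u gx gy →
        ∃ c : ℝ, ∀ᵐ p ∂(volume.restrict Omega), u p = c * u₁ p) ∧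
      (∀ u gx gy : ℝ × ℝ → ℝ, IsEigenfun α₁ α₂ V (lam1 α₁ α₂ V) u gx gy →
        ¬ (∀ᵐ p ∂(volume.restrict Omega), u p = 0) →
        ((∀ᵐ p ∂(volume.restrict Omega), 0 < u p) ∨
         (∀ᵐ p ∂(volume.restrict Omega), u p < 0))) := by
  have hVm := hV.aestronglyMeasurable
  have hS : ∀ χ, IsTest χ → MemLp (fun p => √(V p) * χ p) 2 μΩ := fun χ hχ =>
    hχ.memLp_sqrt_mul hV hV0
  have hpos := fun f => ae_pos_of_mem_map_groundStates (f := f) hα₁ hα₂ hS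
  obtain ⟨f₁, hf₁, hf₁pos⟩ := exists_pos_mem_map_groundStates hα₁ hα₂ hS
  obtain ⟨g₁x, g₁y, heig⟩ := exists_isEigenfun_of_mem_map_groundStates hf₁ hVm hV0
  refine ⟨f₁, g₁x, g₁y, heig, hf₁pos, fun u gx gy hu => ?_, fun u gx gy hu hne => ?_⟩
  · obtain ⟨f, hf, hfu⟩ := hu.exists_mem_map_groundStates hVm hV0
    obtain ⟨c, rfl⟩ :=
      exists_eq_smul_of_abs_mem (fun _ => abs_mem_map_groundStates) hpos hf hf₁ hf₁pos
    exact ⟨c, hfu.symm.trans (Lp.coeFn_smul c f₁)⟩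
  · obtain ⟨f, hf, hfu⟩ := hu.exists_mem_map_groundStates hVm hV0
    have hf0 : f ≠ 0 := fun h => hne (hfu.symm.trans ((Lp.eq_zero_iff_ae_eq_zero).1 h))
    exact (ae_pos_or_ae_neg_of_abs_mem (fun _ => abs_mem_map_groundStates) hpos hf hf0).imp
      (fun h => by filter_upwards [h, hfu] with p hp hpu using hpu ▸ hp)
      fun h => by filter_upwards [h, hfu] with p hp hpu using hpu ▸ hp

/-- Simplicity and positivity of the ground state: for `V ∈ S_p`,
`1 < p < ∞`, the first eigenvalue `λ₁ = inf { a(u,u) : u ∈ H₀(Ω), ‖u‖_{L²} = 1 }` is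
simple — there is a first eigenfunction `u₁ > 0` a.e. on `Ω` such that every
eigenfunction for `λ₁` is a.e. a scalar multiple of `u₁` — and every nonzero
eigenfunction for `λ₁` is either a.e. positive or a.e. negative on `Ω`. -/
theorem ground_state_simple_positive (α₁ α₂ ppow M : ℝ)
    (hα₁ : α₁ ∈ Ioo (0:ℝ) (1/2)) (hα₂ : α₂ ∈ Ioo (0:ℝ) (1/2))
    (hp : 1 < ppow) (hM : 0 < M) (V : ℝ × ℝ → ℝ) (hV : MemSp ppow M V) :
    ∃ u₁ g₁x g₁y : ℝ × ℝ → ℝ,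
      IsEigenfun α₁ α₂ V (lam1 α₁ α₂ V) u₁ g₁x g₁y ∧
      (∀ᵐ p ∂(volume.restrict Omega), 0 < u₁ p) ∧
      (∀ u gx gy : ℝ × ℝ → ℝ, IsEigenfun α₁ α₂ V (lam1 α₁ α₂ V) u gx gy →
        ∃ c : ℝ, ∀ᵐ p ∂(volume.restrict Omega), u p = c * u₁ p) ∧
      (∀ u gx gy : ℝ × ℝ → ℝ, IsEigenfun α₁ α₂ V (lam1 α₁ α₂ V) u gx gy →
        ¬ (∀ᵐ p ∂(volume.restrict Omega), u p = 0) →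
        ((∀ᵐ p ∂(volume.restrict Omega), 0 < u p) ∨
         (∀ᵐ p ∂(volume.restrict Omega), u p < 0))) :=
  ground_state_simple_positive_general hα₁.2 hα₂.2
    (IntegrableOn.locallyIntegrableOn (hV.1.integrable (ENNReal.one_le_ofReal.2 hp.le))) hV.2.1
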